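/- arXiv:math/9811155 — 6 statements merged into one kernel-verified Lean document; each statement's English description precedes it below -/
import Mathlib

section
/- Let k be a field, λ ∈ k with λ⁶ ≠ 1, and let V be a k-vector space with invertible linear endomorphisms s₁, s₂ satisfying the braid relation s₁s₂s₁ = s₂s₁s₂ and the cubic relations (s_i² − 1)(s_i − λ) = 0 for i = 1, 2. Let W = S₃ be the symmetric group on three letters with simple reflections σ₁, σ₂ (so W = {1, σ₁, σ₂, σ₁σ₂, σ₂σ₁, σ₁σ₂σ₁}), and define T : W → GL(V) on these six elements by T(1) = id, T(σ₁) = s₁, T(σ₂) = s₂, T(σ₁σ₂) = s₁s₂, T(σ₂σ₁) = s₂s₁, T(σ₁σ₂σ₁) = s₁s₂s₁ (well defined since s₁s₂s₁ = s₂s₁s₂). Let K be the space of families (x_w)_{w∈W} of vectors of V such that for i = 1, 2 and every w ∈ W, x_{σ_i w} − s_i(x_w) ∈ range(s_i² − 1). For y ∈ W define i_y : V → K by i_y(v) = (T(w y⁻¹) v)_{w∈W}. Then every element of K is a sum Σ_{y∈W} i_y(v_y) for some vectors v_y ∈ V; that is, K is spanned by the images of the maps i_y, y ∈ W. -/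
/-- The operators `T(w)` for `w ∈ S₃`: `T(1) = id`, `T(σ₁) = s₁`, `T(σ₂) = s₂`,
`T(σ₁σ₂) = s₁s₂`, `T(σ₂σ₁) = s₂s₁`, `T(σ₁σ₂σ₁) = s₁s₂s₁`, where `σ₁ = (0 1)`,
`σ₂ = (1 2)` are the simple reflections of `S₃ = Perm (Fin 3)`. -/
noncomputable def T3 {k V : Type*} [Field k] [AddCommGroup V] [Module k V]
    (s₁ s₂ : V →ₗ[k] V) (w : Equiv.Perm (Fin 3)) : V →ₗ[k] V :=
  if w = 1 then LinearMap.id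
  else if w = Equiv.swap 0 1 then s₁
  else if w = Equiv.swap 1 2 then s₂
  else if w = Equiv.swap 0 1 * Equiv.swap 1 2 then s₁ ∘ₗ s₂
  else if w = Equiv.swap 1 2 * Equiv.swap 0 1 then s₂ ∘ₗ s₁
  else s₁ ∘ₗ s₂ ∘ₗ s₁

/-!
Let `G` be the span of the families `i_y(v)`; it is stable under right translation by `W`.
If `s_i u = λ u`, then `(λ² - 1)⁻¹ (λ i_{σ_i}(u) - i_1(u))` is the truncation of `i_1(u)` to the
`w` with `w σ_i > w`. Subtracting translates of such truncations reduces any family of `K_W(V)`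
modulo `G`, for `W = S₃`, to one supported on the parabolic subgroup `{1, σ₁}`.

A family of `K_W(V)` with values `b` at `1` and `q` at `σ₁`, and `0` elsewhere, satisfies
`b, q ∈ V₂` and `q - s₁ b ∈ V₁`. Put `g = s₁ s₂² s₁` and `D = (s₂² - 1) s₁`. For `u ∈ V₂` the
family with values `u - g u` at `1` and `-D u` at `σ₁` is a difference of two truncations, and so
is its translate by `σ₁`. These suffice to cancel the value `b`. What is left is a vector
`n ∈ V₁ ∩ V₂` at `σ₁`, on which `g = λ⁴` and `D = λ³ - λ`; it is cancelled because the matrix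
`[1 - λ⁴, λ - λ³; λ - λ³, 1 - λ⁴]` has determinant `(1 - λ²)(1 - λ⁶)`.
-/

section Families

variable {R V W ι : Type*} [CommRing R] [AddCommGroup V] [Module R V] [Group W]

/-- The map `i_y : V → K_W(V)`, as a map into all families of vectors indexed by `W`. -/
def orbitFamily (τ : W → Module.End R V) (y : W) : V →ₗ[R] W → V :=
  LinearMap.pi fun w => τ (w * y⁻¹)

/-- The subspace generated by the images of the maps `i_y`, `y ∈ W`. -/
def goodFamilies (τ : W → Module.End R V) : Submodule R (W → V) :=
  ⨆ y, LinearMap.range (orbitFamily τ y)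

/-- The space `K_W(V)`, for reflections `σ i` acting on `V` through the operators `s i`. -/
def compatibleFamilies (σ : ι → W) (s : ι → Module.End R V) : Submodule R (W → V) where
  carrier := {x | ∀ i w, x (σ i * w) - s i (x w) ∈ LinearMap.range (s i * s i - 1)}
  zero_mem' i w := by simp
  add_mem' {x y} hx hy i w := by
    simpa only [Pi.add_apply, map_add, add_sub_add_comm] using add_mem (hx i w) (hy i w)
  smul_mem' c x hx i w := by
    simpa only [Pi.smul_apply, map_smul, smul_sub] using Submodule.smul_mem _ c (hx i w)

/-- The length-additivity rules of the positive lift `τ` of a Coxeter group `W` with simple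
reflections `σ i` to a monoid in which they act as `s i`. The predicate `asc i w` stands for
`ℓ(w σ_i) > ℓ(w)`, so that `asc i w⁻¹` stands for `ℓ(σ_i w) > ℓ(w)`. -/
structure IsPositiveLift {M : Type*} [Monoid M] (σ : ι → W) (s : ι → M) (asc : ι → W → Prop)
    (τ : W → M) : Prop where
  map_one : τ 1 = 1
  refl_mul_self : ∀ i, σ i * σ i = 1
  asc_one : ∀ i, asc i 1
  asc_mul_refl : ∀ i w, ¬ asc i w → asc i (w * σ i)
  map_mul_refl : ∀ i w, asc i w → τ (w * σ i) = τ w * s i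
  map_refl_mul : ∀ i w, asc i w⁻¹ → τ (σ i * w) = s i * τ w

theorem orbitFamily_mem_goodFamilies (τ : W → Module.End R V) (y : W) (v : V) :
    orbitFamily τ y v ∈ goodFamilies τ :=
  Submodule.mem_iSup_of_mem y ⟨v, rfl⟩

theorem exists_eq_sum_of_mem_goodFamilies [Fintype W] {τ : W → Module.End R V} {x : W → V}
    (hx : x ∈ goodFamilies τ) : ∃ v : W → V, ∀ w, x w = ∑ y, τ (w * y⁻¹) (v y) := by
  classical
  have hle : goodFamilies τ ≤ LinearMap.range (LinearMap.lsum R (fun _ => V) R (orbitFamily τ)) :=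
    iSup_le fun y => by
      rintro _ ⟨v, rfl⟩
      exact ⟨Pi.single y v, LinearMap.lsum_piSingle ..⟩
  obtain ⟨v, rfl⟩ := hle hx
  exact ⟨v, fun w => by simp [orbitFamily]⟩

theorem comp_mul_right_mem_goodFamilies {τ : W → Module.End R V} {x : W → V}
    (hx : x ∈ goodFamilies τ) (u : W) : (fun w => x (w * u)) ∈ goodFamilies τ := by
  have hle : goodFamilies τ ≤ (goodFamilies τ).comap (LinearMap.funLeft R V (· * u)) :=
    iSup_le fun y => by
      rintro _ ⟨v, rfl⟩
      have htranslate :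
          LinearMap.funLeft R V (· * u) (orbitFamily τ y v) = orbitFamily τ (y * u⁻¹) v := by
        ext w
        simp [orbitFamily, mul_assoc]
      rw [Submodule.mem_comap, htranslate]
      exact orbitFamily_mem_goodFamilies τ _ v
  exact hle hx

theorem apply_eq_smul_of_mem_range {s : Module.End R V} {lam : R}
    (hs : (s * s - 1) * (s - lam • 1) = 0) {v : V} (hv : v ∈ LinearMap.range (s * s - 1)) :
    s v = lam • v := by
  have hcomm : (s - lam • 1) * (s * s - 1) = 0 := by
    rw [← hs, sub_mul, mul_sub (s * s - 1), smul_one_mul, mul_smul_one]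
    noncomm_ring
  obtain ⟨u, rfl⟩ := hv
  exact sub_eq_zero.1 (LinearMap.congr_fun hcomm u)

theorem apply_eq_smul_of_apply_refl_mul_eq_zero {σ : ι → W} {s : ι → Module.End R V} {lam : R}
    {x : W → V} (hx : x ∈ compatibleFamilies σ s) {i : ι} (hσ : σ i * σ i = 1)
    (hcubic : (s i * s i - 1) * (s i - lam • 1) = 0) {w : W} (hw : x (σ i * w) = 0) :
    s i (x w) = lam • x w :=
  apply_eq_smul_of_mem_range hcubic (by simpa [← mul_assoc, hσ, hw] using hx i (σ i * w))

namespace IsPositiveLift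

section Monoid

variable {M : Type*} [Monoid M] {σ : ι → W} {s : ι → M} {asc : ι → W → Prop} {τ : W → M}

theorem map_eq_mul_of_not_asc (h : IsPositiveLift σ s asc τ) {i : ι} {w : W} (hw : ¬ asc i w) :
    τ w = τ (w * σ i) * s i := by
  rw [← h.map_mul_refl i _ (h.asc_mul_refl i w hw), mul_assoc, h.refl_mul_self, mul_one]

theorem refl_inv (h : IsPositiveLift σ s asc τ) (i : ι) : (σ i)⁻¹ = σ i :=
  inv_eq_of_mul_eq_one_left (h.refl_mul_self i)

theorem map_eq_mul_of_not_asc_inv (h : IsPositiveLift σ s asc τ) {i : ι} {w : W}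
    (hw : ¬ asc i w⁻¹) : τ w = s i * τ (σ i * w) := by
  have hasc : asc i (σ i * w)⁻¹ := by
    simpa only [mul_inv_rev, h.refl_inv] using h.asc_mul_refl i _ hw
  rw [← h.map_refl_mul i _ hasc, ← mul_assoc, h.refl_mul_self, one_mul]

end Monoid

variable {σ : ι → W} {s : ι → Module.End R V} {asc : ι → W → Prop} {τ : W → Module.End R V}

theorem goodFamilies_le_compatibleFamilies (h : IsPositiveLift σ s asc τ) :
    goodFamilies τ ≤ compatibleFamilies σ s := by
  refine iSup_le fun y => ?_
  rintro _ ⟨v, rfl⟩ i w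
  simp only [orbitFamily, LinearMap.pi_apply, mul_assoc]
  by_cases hw : asc i (w * y⁻¹)⁻¹
  · simp [h.map_refl_mul i _ hw]
  · rw [h.map_eq_mul_of_not_asc_inv hw]
    exact ⟨-τ (σ i * (w * y⁻¹)) v, by simp [sub_eq_add_neg, add_comm]⟩

variable {lam : R}

theorem ite_asc_mem_goodFamilies [∀ i, DecidablePred (asc i)] (h : IsPositiveLift σ s asc τ)
    (hlam : IsUnit (lam ^ 2 - 1)) {i : ι} {u : V} (hu : s i u = lam • u) :
    (fun w => if asc i w then τ w u else 0) ∈ goodFamilies τ := by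
  have hcomb : (lam ^ 2 - 1) • (fun w => if asc i w then τ w u else 0) =
      lam • orbitFamily τ (σ i) u - orbitFamily τ 1 u := by
    ext w
    simp only [orbitFamily, Pi.smul_apply, Pi.sub_apply, LinearMap.pi_apply, inv_one, mul_one,
      h.refl_inv]
    split_ifs with hw
    · rw [h.map_mul_refl i w hw, Module.End.mul_apply, hu, map_smul]
      module
    · rw [h.map_eq_mul_of_not_asc hw, Module.End.mul_apply, hu, map_smul, smul_zero, sub_self]
  rw [← Submodule.smul_mem_iff_of_isUnit _ hlam, hcomb]
  exact sub_mem (Submodule.smul_mem _ _ (orbitFamily_mem_goodFamilies τ _ u))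
    (orbitFamily_mem_goodFamilies τ _ u)

theorem exists_sub_mem_goodFamilies_vanish_insert [DecidableEq W] (h : IsPositiveLift σ s asc τ)
    (hlam : IsUnit (lam ^ 2 - 1)) {i : ι} (hcubic : (s i * s i - 1) * (s i - lam • 1) = 0)
    {x : W → V} (hx : x ∈ compatibleFamilies σ s) {A : Finset W} (hA : ∀ w ∈ A, x w = 0)
    {y : W} (hy : σ i * y ∈ A) (hdisj : ∀ w ∈ A, ¬ asc i (w * y⁻¹)) :
    ∃ x' ∈ compatibleFamilies σ s, x - x' ∈ goodFamilies τ ∧ ∀ w ∈ insert y A, x' w = 0 := by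
  classical
  have hxy : s i (x y) = lam • x y :=
    apply_eq_smul_of_apply_refl_mul_eq_zero hx (h.refl_mul_self i) hcubic (hA _ hy)
  set z : W → V := fun w => if asc i (w * y⁻¹) then τ (w * y⁻¹) (x y) else 0
  have hz : z ∈ goodFamilies τ :=
    comp_mul_right_mem_goodFamilies (h.ite_asc_mem_goodFamilies hlam hxy) y⁻¹
  refine ⟨x - z, sub_mem hx (h.goodFamilies_le_compatibleFamilies hz), by simpa using hz,
    fun w hw => ?_⟩
  rcases Finset.mem_insert.1 hw with rfl | hw
  · simp [z, h.asc_one, h.map_one]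
  · simp [z, hA w hw, hdisj w hw]

end IsPositiveLift

end Families

section BraidPair

variable {R V : Type*} [CommRing R] [AddCommGroup V] [Module R V] {lam : R} {s t : Module.End R V}

theorem apply_eq_smul_of_braid (hbraid : s * t * s = t * s * t) {u : V} (hu : t u = lam • u) :
    s (t (s u)) = lam • t (s u) := by
  have := LinearMap.congr_fun hbraid u
  simpa only [Module.End.mul_apply, hu, map_smul] using this

/-- The operator `s t² s`, which preserves the `λ`-eigenspace of `t` when `s` and `t` satisfy the
braid relation. -/
def braidSquare (s t : Module.End R V) : Module.End R V := s * t * t * s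

/-- The operator `(t² - 1) s`: up to the factor `λ² - 1`, it is `s` followed by the projection onto
the `λ`-eigenspace of `t` along the kernel of `t² - 1`. -/
def projectedAction (s t : Module.End R V) : Module.End R V := (t * t - 1) * s

theorem projectedAction_mem_range (s t : Module.End R V) (u : V) :
    projectedAction s t u ∈ LinearMap.range (t * t - 1) :=
  ⟨s u, rfl⟩

theorem apply_braidSquare_eq_smul (hbraid : s * t * s = t * s * t) {u : V} (hu : t u = lam • u) :
    t (braidSquare s t u) = lam • braidSquare s t u :=
  apply_eq_smul_of_braid hbraid.symm (apply_eq_smul_of_braid hbraid hu)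

theorem smul_braidSquare_eq (hbraid : s * t * s = t * s * t) {u : V} (hu : t u = lam • u) :
    (lam ^ 2 - 1) • braidSquare s t u =
      projectedAction s t (projectedAction s t u) + (t * t - 1) (s (s u)) := by
  have hg := apply_braidSquare_eq_smul hbraid hu
  have hfactor : (t * t - 1) * braidSquare s t =
      projectedAction s t * projectedAction s t + (t * t - 1) * (s * s) := by
    simp only [braidSquare, projectedAction]
    noncomm_ring
  calc (lam ^ 2 - 1) • braidSquare s t u = ((t * t - 1) * braidSquare s t) u := by
        simp only [Module.End.mul_apply, LinearMap.sub_apply, Module.End.one_apply, hg, map_smul]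
        module
    _ = _ := by rw [hfactor]; rfl

theorem smul_braidSquare_eq_of_pair (hbraid : s * t * s = t * s * t) {b q : V}
    (hb : t b = lam • b) (hq : t q = lam • q) (hqb : s (q - s b) = lam • (q - s b)) :
    (lam ^ 2 - 1) • braidSquare s t b = projectedAction s t (projectedAction s t b) +
      lam • projectedAction s t b + projectedAction s t q - (lam * (lam ^ 2 - 1)) • q := by
  have hssb : s (s b) = lam • s b + s q - lam • q := by
    rw [map_sub, smul_sub] at hqb
    linear_combination (norm := module) -hqb
  have htq : (t * t - 1) q = (lam ^ 2 - 1) • q := by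
    simp only [LinearMap.sub_apply, Module.End.mul_apply, Module.End.one_apply, hq, map_smul]
    module
  rw [smul_braidSquare_eq hbraid hb, hssb, map_sub, map_add, map_smul, map_smul, htq]
  simp only [projectedAction, Module.End.mul_apply]
  module

theorem exists_sub_braidSquare_sub_projectedAction_eq (hlam : IsUnit (lam ^ 2 - 1))
    (hs : (s * s - 1) * (s - lam • 1) = 0) (ht : (t * t - 1) * (t - lam • 1) = 0)
    (hbraid : s * t * s = t * s * t) {b q : V} (hb : t b = lam • b) (hq : t q = lam • q)
    (hqb : s (q - s b) = lam • (q - s b)) :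
    ∃ u u' : V, t u = lam • u ∧ t u' = lam • u' ∧
      u - braidSquare s t u - projectedAction s t u' = b := by
  have hbq : s (b - s q) = lam • (b - s q) := by
    have hsq := apply_eq_smul_of_mem_range hs ⟨b, rfl⟩
    have : b - s q = -((s * s - 1) b) - s (q - s b) := by simp
    rw [this, map_sub, map_neg, hsq, hqb, map_smul, hqb]
    module
  have hDt : ∀ v, t (projectedAction s t v) = lam • projectedAction s t v := fun v =>
    apply_eq_smul_of_mem_range ht (projectedAction_mem_range s t v)
  have hgb := smul_braidSquare_eq_of_pair hbraid hb hq hqb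
  have hgq := smul_braidSquare_eq_of_pair hbraid hq hb hbq
  obtain ⟨c, hc⟩ := hlam.exists_left_inv
  -- By `hgb` and `hgq`, `u = -c(b - λq)` has `u - g u = b + D(c² D(b - λq) - c q)`.
  refine ⟨-(c • (b - lam • q)), c ^ 2 • projectedAction s t (b - lam • q) - c • q, ?_, ?_, ?_⟩
  · simp only [map_neg, map_sub, map_smul, hb, hq]
    module
  · simp only [map_sub, map_smul, hDt, hq]
    module
  · simp only [map_neg, map_sub, map_smul]
    linear_combination (norm := module) c ^ 2 • hgb - (lam * c ^ 2) • hgq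
      - hc • (c • (braidSquare s t b - lam • braidSquare s t q))
      - hc • (c • projectedAction s t q + (c * lam) • q) + hc • ((lam ^ 2 * c) • b + b)

end BraidPair

section SymmetricGroupThree

/-- The simple reflections `σ₁ = (0 1)` and `σ₂ = (1 2)` of `S₃`, numbered from `0`. -/
def simpleRefl (i : Fin 2) : Equiv.Perm (Fin 3) := Equiv.swap i.castSucc i.succ

/-- For `w ∈ S₃`, the condition `ℓ(w σ_i) > ℓ(w)` on lengths. -/
abbrev IsAscent (i : Fin 2) (w : Equiv.Perm (Fin 3)) : Prop := w i.castSucc < w i.succ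

/-- The positive lift of `S₃` to a monoid in which the simple reflections act as `s 0`, `s 1`. -/
def positiveLift {M : Type*} [Monoid M] (s : Fin 2 → M) (w : Equiv.Perm (Fin 3)) : M :=
  if w = 1 then 1
  else if w = simpleRefl 0 then s 0
  else if w = simpleRefl 1 then s 1
  else if w = simpleRefl 0 * simpleRefl 1 then s 0 * s 1
  else if w = simpleRefl 1 * simpleRefl 0 then s 1 * s 0
  else s 0 * (s 1 * s 0)

theorem perm_fin_three_cases (w : Equiv.Perm (Fin 3)) :
    w = 1 ∨ w = simpleRefl 0 ∨ w = simpleRefl 1 ∨ w = simpleRefl 0 * simpleRefl 1 ∨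
      w = simpleRefl 1 * simpleRefl 0 ∨ w = simpleRefl 0 * simpleRefl 1 * simpleRefl 0 := by
  revert w
  decide

theorem isPositiveLift_positiveLift {M : Type*} [Monoid M] {s : Fin 2 → M}
    (hbraid : s 0 * s 1 * s 0 = s 1 * s 0 * s 1) :
    IsPositiveLift simpleRefl s IsAscent (positiveLift s) where
  map_one := rfl
  refl_mul_self := by decide
  asc_one := by decide
  asc_mul_refl := by decide
  map_mul_refl i w hw := by
    fin_cases i <;> rcases perm_fin_three_cases w with rfl | rfl | rfl | rfl | rfl | rfl <;>
      first
      | exact absurd hw (by decide)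
      | rfl
      | exact (one_mul _).symm
      | exact (mul_assoc _ _ _).symm
      | exact (mul_assoc _ _ _).symm.trans hbraid
  map_refl_mul i w hw := by
    fin_cases i <;> rcases perm_fin_three_cases w with rfl | rfl | rfl | rfl | rfl | rfl <;>
      first
      | exact absurd hw (by decide)
      | rfl
      | exact (mul_one _).symm
      | exact (mul_assoc _ _ _).symm.trans (hbraid.trans (mul_assoc _ _ _))

section Parabolic

variable {V : Type*} [AddZeroClass V]

/-- The family indexed by `S₃` supported on the parabolic subgroup `{1, σ₁}`, with values `p` at `1`
and `q` at `σ₁`. -/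
def parabolicFamily (p q : V) : Equiv.Perm (Fin 3) → V :=
  Pi.single 1 p + Pi.single (simpleRefl 0) q

theorem parabolicFamily_mul_simpleRefl (p q : V) :
    (fun w => parabolicFamily p q (w * simpleRefl 0)) = parabolicFamily q p := by
  ext w
  rcases perm_fin_three_cases w with rfl | rfl | rfl | rfl | rfl | rfl <;>
    simp +decide [parabolicFamily, Pi.single_apply]

theorem eq_parabolicFamily {x : Equiv.Perm (Fin 3) → V}
    (hx : ∀ w, w ≠ 1 → w ≠ simpleRefl 0 → x w = 0) :
    x = parabolicFamily (x 1) (x (simpleRefl 0)) := by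
  ext w
  by_cases h1 : w = 1
  · subst h1
    simp +decide [parabolicFamily]
  · by_cases h2 : w = simpleRefl 0
    · subst h2
      simp +decide [parabolicFamily]
    · simp [parabolicFamily, h1, h2, hx w h1 h2]

end Parabolic

variable {R V : Type*} [CommRing R] [AddCommGroup V] [Module R V] {lam : R}
  {s : Fin 2 → Module.End R V}

theorem parabolicFamily_sub_braidSquare_mem (hlam : IsUnit (lam ^ 2 - 1))
    (hbraid : s 0 * s 1 * s 0 = s 1 * s 0 * s 1) {u : V} (hu : s 1 u = lam • u) :
    parabolicFamily (u - braidSquare (s 0) (s 1) u) (-projectedAction (s 0) (s 1) u) ∈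
      goodFamilies (positiveLift s) := by
  have hlift := isPositiveLift_positiveLift hbraid
  have hfst := hlift.ite_asc_mem_goodFamilies hlam hu
  have hsnd := comp_mul_right_mem_goodFamilies
    (hlift.ite_asc_mem_goodFamilies hlam (apply_eq_smul_of_braid hbraid hu))
    (simpleRefl 0 * simpleRefl 1)
  convert sub_mem hfst hsnd using 1
  ext w
  rcases perm_fin_three_cases w with rfl | rfl | rfl | rfl | rfl | rfl <;>
    simp +decide [parabolicFamily, positiveLift, braidSquare, projectedAction, simpleRefl]

theorem parabolicFamily_neg_projectedAction_mem (hlam : IsUnit (lam ^ 2 - 1))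
    (hbraid : s 0 * s 1 * s 0 = s 1 * s 0 * s 1) {u : V} (hu : s 1 u = lam • u) :
    parabolicFamily (-projectedAction (s 0) (s 1) u) (u - braidSquare (s 0) (s 1) u) ∈
      goodFamilies (positiveLift s) := by
  rw [← parabolicFamily_mul_simpleRefl]
  exact comp_mul_right_mem_goodFamilies (parabolicFamily_sub_braidSquare_mem hlam hbraid hu) _

theorem isUnit_sq_sub_one (hlam : IsUnit (lam ^ 6 - 1)) : IsUnit (lam ^ 2 - 1) :=
  isUnit_of_dvd_unit ⟨lam ^ 4 + lam ^ 2 + 1, by ring⟩ hlam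

theorem parabolicFamily_zero_mem (hlam : IsUnit (lam ^ 6 - 1))
    (hbraid : s 0 * s 1 * s 0 = s 1 * s 0 * s 1) {n : V} (hn : ∀ i, s i n = lam • n) :
    parabolicFamily 0 n ∈ goodFamilies (positiveLift s) := by
  have hfst := parabolicFamily_sub_braidSquare_mem (isUnit_sq_sub_one hlam) hbraid (hn 1)
  have hsnd := parabolicFamily_neg_projectedAction_mem (isUnit_sq_sub_one hlam) hbraid (hn 1)
  have hg : braidSquare (s 0) (s 1) n = lam ^ 4 • n := by
    simp only [braidSquare, Module.End.mul_apply, hn, map_smul]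
    module
  have hD : projectedAction (s 0) (s 1) n = (lam ^ 3 - lam) • n := by
    simp only [projectedAction, Module.End.mul_apply, LinearMap.sub_apply, Module.End.one_apply, hn,
      map_smul]
    module
  rw [hg, hD] at hfst hsnd
  rw [← Submodule.smul_mem_iff_of_isUnit _ hlam]
  convert sub_mem (Submodule.smul_mem _ lam hfst)
    (Submodule.smul_mem _ (1 + lam ^ 2) hsnd) using 1
  ext w
  simp only [parabolicFamily, Pi.smul_apply, Pi.sub_apply, Pi.add_apply, Pi.single_apply]
  split_ifs <;> module

theorem mem_goodFamilies_of_parabolic_support (hlam : IsUnit (lam ^ 6 - 1))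
    (hbraid : s 0 * s 1 * s 0 = s 1 * s 0 * s 1)
    (hcubic : ∀ i, (s i * s i - 1) * (s i - lam • 1) = 0) {x : Equiv.Perm (Fin 3) → V}
    (hx : x ∈ compatibleFamilies simpleRefl s) (hsupp : ∀ w, w ≠ 1 → w ≠ simpleRefl 0 → x w = 0) :
    x ∈ goodFamilies (positiveLift s) := by
  have hlift := isPositiveLift_positiveLift hbraid
  have hμ := isUnit_sq_sub_one hlam
  have heigen {z : Equiv.Perm (Fin 3) → V} (hz : z ∈ compatibleFamilies simpleRefl s) (i w)
      (hw : z (simpleRefl i * w) = 0) : s i (z w) = lam • z w :=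
    apply_eq_smul_of_apply_refl_mul_eq_zero hz (hlift.refl_mul_self i) (hcubic i) hw
  obtain ⟨u, u', hu, hu', hsum⟩ := exists_sub_braidSquare_sub_projectedAction_eq hμ (hcubic 0)
    (hcubic 1) hbraid (heigen hx 1 1 (hsupp _ (by decide) (by decide)))
    (heigen hx 1 (simpleRefl 0) (hsupp _ (by decide) (by decide)))
    (apply_eq_smul_of_mem_range (hcubic 0) (hx 0 1))
  have hgood := add_mem (parabolicFamily_sub_braidSquare_mem hμ hbraid hu)
    (parabolicFamily_neg_projectedAction_mem hμ hbraid hu')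
  set c := parabolicFamily (u - braidSquare (s 0) (s 1) u) (-projectedAction (s 0) (s 1) u) +
    parabolicFamily (-projectedAction (s 0) (s 1) u') (u' - braidSquare (s 0) (s 1) u')
  have hz := sub_mem hx (hlift.goodFamilies_le_compatibleFamilies hgood)
  have hz_one : (x - c) 1 = 0 := by
    simp +decide [c, parabolicFamily, ← hsum, sub_eq_add_neg]
  have hz_supp : ∀ w, w ≠ 1 → w ≠ simpleRefl 0 → (x - c) w = 0 := fun w h1 h2 => by
    simp [c, parabolicFamily, h1, h2, hsupp w h1 h2]
  have hn : ∀ i, s i ((x - c) (simpleRefl 0)) = lam • (x - c) (simpleRefl 0) :=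
    Fin.forall_fin_two.2 ⟨heigen hz 0 _ ((hlift.refl_mul_self 0).symm ▸ hz_one),
      heigen hz 1 _ (hz_supp _ (by decide) (by decide))⟩
  rw [← Submodule.sub_mem_iff_left _ hgood, eq_parabolicFamily hz_supp, hz_one]
  exact parabolicFamily_zero_mem hlam hbraid hn

theorem exists_sub_mem_goodFamilies_parabolic_support (hlam : IsUnit (lam ^ 2 - 1))
    (hbraid : s 0 * s 1 * s 0 = s 1 * s 0 * s 1)
    (hcubic : ∀ i, (s i * s i - 1) * (s i - lam • 1) = 0) {x : Equiv.Perm (Fin 3) → V}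
    (hx : x ∈ compatibleFamilies simpleRefl s) :
    ∃ x' ∈ compatibleFamilies simpleRefl s, x - x' ∈ goodFamilies (positiveLift s) ∧
      ∀ w, w ≠ 1 → w ≠ simpleRefl 0 → x' w = 0 := by
  have hlift := isPositiveLift_positiveLift hbraid
  let y := simpleRefl 0 * simpleRefl 1
  have hgood₀ := orbitFamily_mem_goodFamilies (positiveLift s) y (x y)
  have hx₀ := sub_mem hx (hlift.goodFamilies_le_compatibleFamilies hgood₀)
  have hvan₀ : ∀ w ∈ ({y} : Finset (Equiv.Perm (Fin 3))),
      (x - orbitFamily (positiveLift s) y (x y)) w = 0 := by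
    simp [orbitFamily, hlift.map_one]
  obtain ⟨x₁, hx₁, hgood₁, hvan₁⟩ := hlift.exists_sub_mem_goodFamilies_vanish_insert hlam
    (hcubic 0) hx₀ hvan₀ (y := simpleRefl 1) (by decide) (by decide)
  obtain ⟨x₂, hx₂, hgood₂, hvan₂⟩ := hlift.exists_sub_mem_goodFamilies_vanish_insert hlam
    (hcubic 1) hx₁ hvan₁ (y := simpleRefl 0 * simpleRefl 1 * simpleRefl 0) (by decide) (by decide)
  obtain ⟨x₃, hx₃, hgood₃, hvan₃⟩ := hlift.exists_sub_mem_goodFamilies_vanish_insert hlam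
    (hcubic 0) hx₂ hvan₂ (y := simpleRefl 1 * simpleRefl 0) (by decide) (by decide)
  have hcompl : ∀ w, w ≠ 1 → w ≠ simpleRefl 0 →
      w ∈ ({simpleRefl 1 * simpleRefl 0, simpleRefl 0 * simpleRefl 1 * simpleRefl 0,
        simpleRefl 1, simpleRefl 0 * simpleRefl 1} : Finset (Equiv.Perm (Fin 3))) := by
    decide
  refine ⟨x₃, hx₃, ?_, fun w h1 h2 => hvan₃ w (hcompl w h1 h2)⟩
  convert add_mem hgood₀ (add_mem hgood₁ (add_mem hgood₂ hgood₃)) using 1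
  abel

end SymmetricGroupThree

theorem stmt_12_general {R V : Type*} [CommRing R] [AddCommGroup V] [Module R V] {lam : R}
    (hlam : IsUnit (lam ^ 6 - 1)) {s : Fin 2 → Module.End R V}
    (hbraid : s 0 * s 1 * s 0 = s 1 * s 0 * s 1)
    (hcubic : ∀ i, (s i * s i - 1) * (s i - lam • 1) = 0) {x : Equiv.Perm (Fin 3) → V}
    (hx : x ∈ compatibleFamilies simpleRefl s) :
    ∃ v : Equiv.Perm (Fin 3) → V, ∀ w, x w = ∑ y, positiveLift s (w * y⁻¹) (v y) := by
  obtain ⟨x', hx', hgood, hsupp⟩ :=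
    exists_sub_mem_goodFamilies_parabolic_support (isUnit_sq_sub_one hlam) hbraid hcubic hx
  have hgood' := mem_goodFamilies_of_parabolic_support hlam hbraid hcubic hx' hsupp
  exact exists_eq_sum_of_mem_goodFamilies ((Submodule.sub_mem_iff_left _ hgood').1 hgood)

/-- (Every representation of `Br₃` through the cubic relation
`(s² − 1)(s − λ) = 0` with `λ⁶ ≠ 1` is good.) If `(x_w)_{w ∈ S₃}` satisfies
`x_{σᵢw} − sᵢ(x_w) ∈ range(sᵢ² − 1)` for `i = 1, 2` and all `w`, then
`x_w = Σ_y T(w y⁻¹)(v_y)` for some vectors `v_y ∈ V`. -/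
theorem stmt_12 {k V : Type*} [Field k] [AddCommGroup V] [Module k V]
    (lam : k) (hlam : lam ^ 6 ≠ 1)
    (s₁ s₂ : V →ₗ[k] V) (hs₁ : Function.Bijective s₁) (hs₂ : Function.Bijective s₂)
    (hbraid : s₁ ∘ₗ s₂ ∘ₗ s₁ = s₂ ∘ₗ s₁ ∘ₗ s₂)
    (hcub₁ : (s₁ ∘ₗ s₁ - LinearMap.id) ∘ₗ (s₁ - lam • LinearMap.id) = 0)
    (hcub₂ : (s₂ ∘ₗ s₂ - LinearMap.id) ∘ₗ (s₂ - lam • LinearMap.id) = 0)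
    (x : Equiv.Perm (Fin 3) → V)
    (hx₁ : ∀ w, x (Equiv.swap 0 1 * w) - s₁ (x w) ∈
      LinearMap.range (s₁ ∘ₗ s₁ - LinearMap.id))
    (hx₂ : ∀ w, x (Equiv.swap 1 2 * w) - s₂ (x w) ∈
      LinearMap.range (s₂ ∘ₗ s₂ - LinearMap.id)) :
    ∃ v : Equiv.Perm (Fin 3) → V,
      ∀ w, x w = ∑ y : Equiv.Perm (Fin 3), T3 s₁ s₂ (w * y⁻¹) (v y) := by
  exact stmt_12_general (s := ![s₁, s₂]) (sub_ne_zero.2 hlam).isUnit hbraid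
    (Fin.forall_fin_two.2 ⟨hcub₁, hcub₂⟩) (Fin.forall_fin_two.2 ⟨hx₁, hx₂⟩)
end

section
/- Let V be a complex vector space, q ∈ ℂ with q ≠ 0, and let s₁, s₂ be invertible linear endomorphisms of V satisfying the braid relation of type B₂, (s₁s₂)² = (s₂s₁)², and the cubic relations (s_i − q)(s_i² − 1) = 0 for i = 1, 2. Let v ∈ V satisfy s₁ v = q v and (s₂ − q)(s₂ − 1) v = 0. Then the smallest subspace of V containing v and invariant under s₁, s₂, s₁⁻¹ and s₂⁻¹ is spanned by the seven vectors v, s₂v, s₁s₂v, s₁⁻¹s₂v, s₂s₁s₂v, s₂s₁⁻¹s₂v, s₁s₂s₁⁻¹s₂v; in particular it is finite-dimensional (of dimension at most 7). -/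
/-!
Let `x = s₁s₂`, and write the eigenvalue and quadratic conditions on `v` as `s₁ v = l v` and
`s₂² v = e s₂ v + d v`. Applying `s₁` to the latter gives `s₂ v = e v + d l x⁻¹ v`, that is,
`s₁⁻¹ (x v) = e v + d l x⁻¹ v`, while `s₁⁻¹ v = l⁻¹ v`. By the braid relation `x²` commutes with
`s₁`, so these two formulas determine `s₁⁻¹` on the whole orbit `xⁿ v`, `n ∈ ℤ`, and the span of the
orbit is the submodule generated by `v`.

The cubic relation for `s₁`, divided by `s₁²` and evaluated at `s₁⁻¹ (x v)`, becomes a linear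
recurrence of order six for the orbit whose extreme coefficients are units. Hence the six vectors
`x⁻³ v, …, x² v` span everything, and they are combinations of the seven given ones.
-/

open Submodule

section Recurrence

variable {R V : Type*} [Semiring R] [AddCommMonoid V] [Module R V] {y : ℤ → V} {d : ℤ}

theorem span_image_Ico_add_one_eq
    (hnext : ∀ n, y (n + d) ∈ span R (y '' Set.Ico n (n + d)))
    (hprev : ∀ n, y n ∈ span R (y '' Set.Ioc n (n + d))) (m : ℤ) :
    span R (y '' Set.Ico (m + 1) (m + 1 + d)) = span R (y '' Set.Ico m (m + d)) := by
  have hshift : Set.Ico (m + 1) (m + 1 + d) = Set.Ioc m (m + d) := by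
    ext; simp only [Set.mem_Ico, Set.mem_Ioc]; lia
  rw [hshift]
  apply le_antisymm <;> rw [span_le, Set.image_subset_iff] <;> intro n hn
  · obtain rfl | hlt := eq_or_lt_of_le hn.2
    · exact hnext m
    · exact mem_span_of_mem ⟨n, ⟨hn.1.le, hlt⟩, rfl⟩
  · obtain rfl | hlt := eq_or_lt_of_le hn.1
    · exact hprev m
    · exact mem_span_of_mem ⟨n, ⟨hlt, hn.2.le⟩, rfl⟩

theorem span_image_Ico_eq_span_range (hd : 0 < d)
    (hnext : ∀ n, y (n + d) ∈ span R (y '' Set.Ico n (n + d)))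
    (hprev : ∀ n, y n ∈ span R (y '' Set.Ioc n (n + d))) (m : ℤ) :
    span R (y '' Set.Ico m (m + d)) = span R (Set.range y) := by
  have hperiodic : Function.Periodic (fun n ↦ span R (y '' Set.Ico n (n + d))) 1 :=
    span_image_Ico_add_one_eq hnext hprev
  refine le_antisymm (span_mono (Set.image_subset_range _ _)) (span_le.2 ?_)
  rintro _ ⟨n, rfl⟩
  have hwindow : span R (y '' Set.Ico m (m + d)) = span R (y '' Set.Ico n (n + d)) := by
    simpa using (hperiodic.int_mul (n - m) m).symm
  rw [hwindow]
  exact mem_span_of_mem ⟨n, ⟨le_rfl, by lia⟩, rfl⟩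

end Recurrence

theorem commute_mul_sq_left_of_braid {M : Type*} [Monoid M] {a b : M}
    (h : a * b * a * b = b * a * b * a) : Commute ((a * b) ^ 2) a := by
  have hsq : (a * b) ^ 2 = b * a * b * a := by rw [← h, sq, ← mul_assoc]
  calc (a * b) ^ 2 * a = a * (b * a * b * a) := by simp only [sq, mul_assoc]
    _ = a * (a * b) ^ 2 := by rw [hsq]

section Generated

variable {R V : Type*} [Semiring R] [AddCommMonoid V] [Module R V] {s₁ s₂ : V ≃ₗ[R] V} {v : V}

/-- The submodule generated by `v` under the group generated by `s₁` and `s₂`: the smallest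
submodule containing `v` and stable under both operators and their inverses. -/
def generatedSubmodule (s₁ s₂ : V ≃ₗ[R] V) (v : V) : Submodule R V :=
  sInf {U : Submodule R V | v ∈ U ∧ ∀ x ∈ U,
    s₁ x ∈ U ∧ s₂ x ∈ U ∧ s₁.symm x ∈ U ∧ s₂.symm x ∈ U}

theorem span_le_generatedSubmodule :
    span R {v, s₂ v, s₁ (s₂ v), s₁.symm (s₂ v), s₂ (s₁ (s₂ v)),
      s₂ (s₁.symm (s₂ v)), s₁ (s₂ (s₁.symm (s₂ v)))} ≤ generatedSubmodule s₁ s₂ v := by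
  refine le_sInf fun U ⟨hv, hU⟩ ↦ span_le.2 ?_
  have h₁ {u : V} (hu : u ∈ U) : s₁ u ∈ U := (hU u hu).1
  have h₂ {u : V} (hu : u ∈ U) : s₂ u ∈ U := (hU u hu).2.1
  have hsymm : s₁.symm (s₂ v) ∈ U := (hU _ (h₂ hv)).2.2.1
  rintro _ (rfl | rfl | rfl | rfl | rfl | rfl | rfl)
  exacts [hv, h₂ hv, h₁ (h₂ hv), hsymm, h₂ (h₁ (h₂ hv)), h₂ hsymm, h₁ (h₂ hsymm)]

/-- The two-sided orbit `n ↦ (s₁s₂)ⁿ v` of `v`. In powers of linear equivalences, `*` is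
composition. -/
def mulOrbit (s₁ s₂ : V ≃ₗ[R] V) (v : V) (n : ℤ) : V := ((s₁ * s₂) ^ n) v

@[simp]
theorem mulOrbit_zero : mulOrbit s₁ s₂ v 0 = v := rfl

theorem zpow_mulOrbit (m n : ℤ) :
    ((s₁ * s₂) ^ m) (mulOrbit s₁ s₂ v n) = mulOrbit s₁ s₂ v (m + n) := by
  rw [mulOrbit, mulOrbit, zpow_add, LinearEquiv.mul_apply]

theorem mul_mulOrbit (n : ℤ) : s₁ (s₂ (mulOrbit s₁ s₂ v n)) = mulOrbit s₁ s₂ v (n + 1) := by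
  simpa [add_comm] using zpow_mulOrbit (s₁ := s₁) (s₂ := s₂) (v := v) 1 n

theorem symm_symm_mulOrbit (n : ℤ) :
    s₂.symm (s₁.symm (mulOrbit s₁ s₂ v n)) = mulOrbit s₁ s₂ v (n - 1) := by
  rw [LinearEquiv.symm_apply_eq, LinearEquiv.symm_apply_eq, mul_mulOrbit, sub_add_cancel]

theorem symm_zpow_two_mul_of_braid
    (hbraid : ∀ u, s₁ (s₂ (s₁ (s₂ u))) = s₂ (s₁ (s₂ (s₁ u)))) (k : ℤ) (u : V) :
    s₁.symm (((s₁ * s₂) ^ (2 * k)) u) = ((s₁ * s₂) ^ (2 * k)) (s₁.symm u) := by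
  have hcomm : Commute (((s₁ * s₂) ^ 2) ^ k) s₁⁻¹ :=
    ((commute_mul_sq_left_of_braid (LinearEquiv.ext hbraid)).zpow_left k).inv_right
  rw [zpow_mul]
  exact (LinearEquiv.congr_fun hcomm.eq u).symm

end Generated

section BraidB2

variable {R V : Type*} [CommRing R] [AddCommGroup V] [Module R V] {s₁ s₂ : V ≃ₗ[R] V} {v : V}
  {α β γ l μ e d κ : R}

theorem eq_smul_symm_of_cubic
    (hcub : ∀ u, s₁ (s₁ (s₁ u)) = α • s₁ (s₁ u) + β • s₁ u + γ • u) (u : V) :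
    s₁ u = α • u + β • s₁.symm u + γ • s₁.symm (s₁.symm u) := by
  simpa only [LinearEquiv.apply_symm_apply] using hcub (s₁.symm (s₁.symm u))

theorem apply_eq_smul_add_smul_mulOrbit_neg_one (h₁ : s₁ v = l • v)
    (h₂ : s₂ (s₂ v) = e • s₂ v + d • v) :
    s₂ v = e • v + (d * l) • mulOrbit s₁ s₂ v (-1) := by
  have himage : s₁ (s₂ (s₂ v)) = s₁ (s₂ (e • v + (d * l) • mulOrbit s₁ s₂ v (-1))) := by
    simp only [h₂, map_add, map_smul, h₁, mul_mulOrbit, neg_add_cancel, mulOrbit_zero, mul_smul]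
  exact s₂.injective (s₁.injective himage)

theorem symm_mulOrbit_of_even (hbraid : ∀ u, s₁ (s₂ (s₁ (s₂ u))) = s₂ (s₁ (s₂ (s₁ u))))
    (hμ : s₁.symm v = μ • v) {n : ℤ} (hn : Even n) :
    s₁.symm (mulOrbit s₁ s₂ v n) = μ • mulOrbit s₁ s₂ v n := by
  obtain ⟨k, rfl⟩ := hn.two_dvd
  rw [mulOrbit, symm_zpow_two_mul_of_braid hbraid, hμ, map_smul]

theorem symm_mulOrbit_of_odd (hbraid : ∀ u, s₁ (s₂ (s₁ (s₂ u))) = s₂ (s₁ (s₂ (s₁ u))))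
    (hκ : s₂ v = e • v + κ • mulOrbit s₁ s₂ v (-1)) {n : ℤ} (hn : Odd n) :
    s₁.symm (mulOrbit s₁ s₂ v n) = e • mulOrbit s₁ s₂ v (n - 1) + κ • mulOrbit s₁ s₂ v (n - 2) := by
  obtain ⟨k, rfl⟩ := hn
  have hone : s₁.symm (mulOrbit s₁ s₂ v 1) = s₂ v := s₁.symm_apply_apply (s₂ v)
  rw [← zpow_mulOrbit, symm_zpow_two_mul_of_braid hbraid, hone, hκ, map_add, map_smul, map_smul,
    zpow_mulOrbit, add_sub_cancel_right, show 2 * k + 1 - 2 = 2 * k + -1 by ring]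
  rfl

theorem mulOrbit_add_six (hbraid : ∀ u, s₁ (s₂ (s₁ (s₂ u))) = s₂ (s₁ (s₂ (s₁ u))))
    (hcub : ∀ u, s₁ (s₁ (s₁ u)) = α • s₁ (s₁ u) + β • s₁ u + γ • u)
    (hμ : s₁.symm v = μ • v) (hκ : s₂ v = e • v + κ • mulOrbit s₁ s₂ v (-1)) (n : ℤ) :
    mulOrbit s₁ s₂ v (n + 6) =
      (e * (α + β * μ + γ * μ ^ 2)) • mulOrbit s₁ s₂ v (n + 5) +
      (α * κ) • mulOrbit s₁ s₂ v (n + 4) + (e * κ * (β + γ * μ)) • mulOrbit s₁ s₂ v (n + 3) +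
      (β * κ ^ 2) • mulOrbit s₁ s₂ v (n + 2) + (γ * e * κ ^ 2) • mulOrbit s₁ s₂ v (n + 1) +
      (γ * κ ^ 3) • mulOrbit s₁ s₂ v n := by
  have hsymm₁ : s₁.symm (mulOrbit s₁ s₂ v 1) = e • v + κ • mulOrbit s₁ s₂ v (-1) := by
    simpa using symm_mulOrbit_of_odd hbraid hκ (n := 1) (by decide)
  have hsymm_neg₁ : s₁.symm (mulOrbit s₁ s₂ v (-1)) =
      e • mulOrbit s₁ s₂ v (-2) + κ • mulOrbit s₁ s₂ v (-3) :=
    symm_mulOrbit_of_odd hbraid hκ (by decide)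
  have hsymm_neg₂ : s₁.symm (mulOrbit s₁ s₂ v (-2)) = μ • mulOrbit s₁ s₂ v (-2) :=
    symm_mulOrbit_of_even hbraid hμ (by decide)
  have hsymm_neg₃ : s₁.symm (mulOrbit s₁ s₂ v (-3)) =
      e • mulOrbit s₁ s₂ v (-4) + κ • mulOrbit s₁ s₂ v (-5) :=
    symm_mulOrbit_of_odd hbraid hκ (by decide)
  have hbase : mulOrbit s₁ s₂ v 1 =
      (e * (α + β * μ + γ * μ ^ 2)) • mulOrbit s₁ s₂ v 0 + (α * κ) • mulOrbit s₁ s₂ v (-1) +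
      (e * κ * (β + γ * μ)) • mulOrbit s₁ s₂ v (-2) + (β * κ ^ 2) • mulOrbit s₁ s₂ v (-3) +
      (γ * e * κ ^ 2) • mulOrbit s₁ s₂ v (-4) + (γ * κ ^ 3) • mulOrbit s₁ s₂ v (-5) := by
    rw [← s₁.apply_symm_apply (mulOrbit s₁ s₂ v 1), eq_smul_symm_of_cubic hcub]
    simp only [hsymm₁, hsymm_neg₁, hsymm_neg₂, hsymm_neg₃, hμ, map_add, map_smul, mulOrbit_zero]
    module
  have hshift := congr_arg ((s₁ * s₂) ^ (n + 5)) hbase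
  simp only [map_add, map_smul, zpow_mulOrbit] at hshift
  ring_nf at hshift ⊢
  exact hshift

theorem span_mulOrbit_Ico_eq_span_range
    (hbraid : ∀ u, s₁ (s₂ (s₁ (s₂ u))) = s₂ (s₁ (s₂ (s₁ u))))
    (hcub : ∀ u, s₁ (s₁ (s₁ u)) = α • s₁ (s₁ u) + β • s₁ u + γ • u)
    (hμ : s₁.symm v = μ • v) (hκ : s₂ v = e • v + κ • mulOrbit s₁ s₂ v (-1))
    (hγ_unit : IsUnit γ) (hκ_unit : IsUnit κ) :
    span R (mulOrbit s₁ s₂ v '' Set.Ico (-3) 3) = span R (Set.range (mulOrbit s₁ s₂ v)) := by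
  have hrec (n : ℤ) := mulOrbit_add_six hbraid hcub hμ hκ n
  have hsmul_mem {S : Set ℤ} {m : ℤ} (hm : m ∈ S) (r : R) :
      r • mulOrbit s₁ s₂ v m ∈ span R (mulOrbit s₁ s₂ v '' S) :=
    smul_mem _ r (mem_span_of_mem ⟨m, hm, rfl⟩)
  refine span_image_Ico_eq_span_range (d := 6) (by norm_num) (fun n ↦ ?_) (fun n ↦ ?_) (-3)
  · rw [hrec]
    refine add_mem (add_mem (add_mem (add_mem (add_mem ?_ ?_) ?_) ?_) ?_) ?_ <;>
      exact hsmul_mem (by constructor <;> lia) _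
  · have hlowest := eq_sub_of_add_eq' (hrec n).symm
    refine (smul_mem_iff_of_isUnit _ (hγ_unit.mul (hκ_unit.pow 3))).1 (hlowest ▸ ?_)
    refine sub_mem (subset_span ⟨n + 6, by constructor <;> lia, rfl⟩) ?_
    refine add_mem (add_mem (add_mem (add_mem ?_ ?_) ?_) ?_) ?_ <;>
      exact hsmul_mem (by constructor <;> lia) _

theorem generatedSubmodule_le_span_range_mulOrbit
    (hbraid : ∀ u, s₁ (s₂ (s₁ (s₂ u))) = s₂ (s₁ (s₂ (s₁ u))))
    (hcub : ∀ u, s₁ (s₁ (s₁ u)) = α • s₁ (s₁ u) + β • s₁ u + γ • u)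
    (hμ : s₁.symm v = μ • v) (hκ : s₂ v = e • v + κ • mulOrbit s₁ s₂ v (-1)) :
    generatedSubmodule s₁ s₂ v ≤ span R (Set.range (mulOrbit s₁ s₂ v)) := by
  set W := span R (Set.range (mulOrbit s₁ s₂ v))
  have horbit (n : ℤ) : mulOrbit s₁ s₂ v n ∈ W := mem_span_of_mem ⟨n, rfl⟩
  have hstable (f : V →ₗ[R] V) (hf : ∀ n, f (mulOrbit s₁ s₂ v n) ∈ W) : W ≤ W.comap f :=
    span_le.2 (Set.range_subset_iff.2 hf)
  have hmul : W ≤ W.comap (s₁.toLinearMap ∘ₗ s₂.toLinearMap) := hstable _ fun n ↦ by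
    simpa only [LinearMap.comp_apply, LinearEquiv.coe_coe, mul_mulOrbit] using horbit (n + 1)
  have hmul_symm : W ≤ W.comap (s₂.symm.toLinearMap ∘ₗ s₁.symm.toLinearMap) :=
    hstable _ fun n ↦ by
      simpa only [LinearMap.comp_apply, LinearEquiv.coe_coe, symm_symm_mulOrbit] using
        horbit (n - 1)
  have hsymm₁ : W ≤ W.comap s₁.symm.toLinearMap := hstable _ fun n ↦ by
    rw [LinearEquiv.coe_coe]
    obtain heven | hodd := n.even_or_odd
    · rw [symm_mulOrbit_of_even hbraid hμ heven]
      exact W.smul_mem _ (horbit _)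
    · rw [symm_mulOrbit_of_odd hbraid hκ hodd]
      exact add_mem (smul_mem _ _ (horbit _)) (smul_mem _ _ (horbit _))
  have hs₁ {u : V} (hu : u ∈ W) : s₁ u ∈ W := by
    rw [eq_smul_symm_of_cubic hcub]
    exact add_mem (add_mem (smul_mem _ _ hu) (smul_mem _ _ (hsymm₁ hu)))
      (smul_mem _ _ (hsymm₁ (hsymm₁ hu)))
  refine sInf_le ⟨horbit 0, fun u hu ↦ ⟨hs₁ hu, ?_, hsymm₁ hu, ?_⟩⟩
  · rw [← s₁.symm_apply_apply (s₂ u)]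
    exact hsymm₁ (hmul hu)
  · rw [← s₁.symm_apply_apply u]
    exact hmul_symm (hs₁ hu)

theorem symm_apply_eq_add_mulOrbit
    (hbraid : ∀ u, s₁ (s₂ (s₁ (s₂ u))) = s₂ (s₁ (s₂ (s₁ u))))
    (hμ : s₁.symm v = μ • v) (hκ : s₂ v = e • v + κ • mulOrbit s₁ s₂ v (-1)) :
    s₁.symm (s₂ v) =
      (e * μ) • v + (κ * e) • mulOrbit s₁ s₂ v (-2) + (κ * κ) • mulOrbit s₁ s₂ v (-3) := by
  have hsymm_neg₁ : s₁.symm (mulOrbit s₁ s₂ v (-1)) =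
      e • mulOrbit s₁ s₂ v (-2) + κ • mulOrbit s₁ s₂ v (-3) :=
    symm_mulOrbit_of_odd hbraid hκ (by decide)
  rw [hκ, map_add, map_smul, map_smul, hμ, hsymm_neg₁]
  module

theorem apply_apply_symm_apply_eq_add_mulOrbit
    (hbraid : ∀ u, s₁ (s₂ (s₁ (s₂ u))) = s₂ (s₁ (s₂ (s₁ u))))
    (hμ : s₁.symm v = μ • v) (hκ : s₂ v = e • v + κ • mulOrbit s₁ s₂ v (-1)) :
    s₁ (s₂ (s₁.symm (s₂ v))) =
      (e * μ) • mulOrbit s₁ s₂ v 1 + (κ * e) • mulOrbit s₁ s₂ v (-1) +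
        (κ * κ) • mulOrbit s₁ s₂ v (-2) := by
  rw [symm_apply_eq_add_mulOrbit hbraid hμ hκ]
  simp only [map_add, map_smul, mul_mulOrbit]
  rfl

theorem span_mulOrbit_Ico_le (hbraid : ∀ u, s₁ (s₂ (s₁ (s₂ u))) = s₂ (s₁ (s₂ (s₁ u))))
    (h₁ : s₁ v = l • v) (hμ : s₁.symm v = μ • v)
    (hκ : s₂ v = e • v + κ • mulOrbit s₁ s₂ v (-1)) (hκ_unit : IsUnit κ) :
    span R (mulOrbit s₁ s₂ v '' Set.Ico (-3) 3) ≤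
      span R {v, s₂ v, s₁ (s₂ v), s₁.symm (s₂ v), s₂ (s₁ (s₂ v)),
        s₂ (s₁.symm (s₂ v)), s₁ (s₂ (s₁.symm (s₂ v)))} := by
  set y := mulOrbit s₁ s₂ v with hy
  set W := span R {v, s₂ v, s₁ (s₂ v), s₁.symm (s₂ v), s₂ (s₁ (s₂ v)),
    s₂ (s₁.symm (s₂ v)), s₁ (s₂ (s₁.symm (s₂ v)))}
  have hκ_mem {u : V} (hu : κ • u ∈ W) : u ∈ W := (smul_mem_iff_of_isUnit _ hκ_unit).1 hu
  have h0 : y 0 ∈ W := mem_span_of_mem (by simp [hy])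
  have hpos₁ : y 1 ∈ W := mem_span_of_mem (Or.inr (Or.inr (Or.inl rfl)))
  have hpos₂ : y 2 ∈ W := by
    have heq : y 2 = l • s₂ (s₁ (s₂ v)) := by
      have hbraid_v := hbraid v
      rwa [h₁, map_smul, map_smul, map_smul] at hbraid_v
    rw [heq]
    exact smul_mem _ _ (mem_span_of_mem (by simp))
  have hneg₁ : y (-1) ∈ W := by
    refine hκ_mem ?_
    rw [eq_sub_of_add_eq' hκ.symm]
    exact sub_mem (mem_span_of_mem (by simp)) (smul_mem _ _ h0)
  have hneg₂ : y (-2) ∈ W := by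
    refine hκ_mem (hκ_mem ?_)
    rw [smul_smul, eq_sub_of_add_eq' (apply_apply_symm_apply_eq_add_mulOrbit hbraid hμ hκ).symm]
    exact sub_mem (mem_span_of_mem (by simp)) (add_mem (smul_mem _ _ hpos₁) (smul_mem _ _ hneg₁))
  have hneg₃ : y (-3) ∈ W := by
    refine hκ_mem (hκ_mem ?_)
    rw [smul_smul, eq_sub_of_add_eq' (symm_apply_eq_add_mulOrbit hbraid hμ hκ).symm]
    exact sub_mem (mem_span_of_mem (by simp)) (add_mem (smul_mem _ _ h0) (smul_mem _ _ hneg₂))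
  rw [span_le, Set.image_subset_iff]
  rintro n ⟨hlow, hhigh⟩
  interval_cases n
  exacts [hneg₃, hneg₂, hneg₁, h0, hpos₁, hpos₂]

end BraidB2

theorem stmt_13_general {R V : Type*} [CommRing R] [Nontrivial R] [AddCommGroup V] [Module R V]
    {α β γ l e d : R} (hγ : IsUnit γ) (hl : IsUnit l) (hd : IsUnit d) (s₁ s₂ : V ≃ₗ[R] V)
    (hbraid : ∀ u, s₁ (s₂ (s₁ (s₂ u))) = s₂ (s₁ (s₂ (s₁ u))))
    (hcub : ∀ u, s₁ (s₁ (s₁ u)) = α • s₁ (s₁ u) + β • s₁ u + γ • u)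
    (v : V) (h₁ : s₁ v = l • v) (h₂ : s₂ (s₂ v) = e • s₂ v + d • v) :
    generatedSubmodule s₁ s₂ v = span R {v, s₂ v, s₁ (s₂ v), s₁.symm (s₂ v), s₂ (s₁ (s₂ v)),
      s₂ (s₁.symm (s₂ v)), s₁ (s₂ (s₁.symm (s₂ v)))} ∧
    Module.Finite R (generatedSubmodule s₁ s₂ v) ∧
    Module.finrank R (generatedSubmodule s₁ s₂ v) ≤ 6 := by
  obtain ⟨μ, hμl⟩ := hl.exists_left_inv
  have hμ : s₁.symm v = μ • v := by
    rw [LinearEquiv.symm_apply_eq, map_smul, h₁, smul_smul, hμl, one_smul]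
  have hκ := apply_eq_smul_add_smul_mulOrbit_neg_one h₁ h₂
  have hgen_le : generatedSubmodule s₁ s₂ v ≤ span R (mulOrbit s₁ s₂ v '' Set.Ico (-3) 3) :=
    (generatedSubmodule_le_span_range_mulOrbit hbraid hcub hμ hκ).trans_eq
      (span_mulOrbit_Ico_eq_span_range hbraid hcub hμ hκ hγ (hd.mul hl)).symm
  have hle_seven := span_mulOrbit_Ico_le hbraid h₁ hμ hκ (hd.mul hl)
  have hgen := hgen_le.antisymm (hle_seven.trans span_le_generatedSubmodule)
  refine ⟨(hgen_le.trans hle_seven).antisymm span_le_generatedSubmodule, ?_, ?_⟩ <;> rw [hgen]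
  · exact Module.Finite.span_of_finite R ((Set.finite_Ico _ _).image _)
  · classical
    rw [← Finset.coe_Ico, ← Finset.coe_image]
    exact (finrank_span_finset_le_card _).trans Finset.card_image_le

/-- Let `s₁, s₂` be invertible operators on a complex vector space satisfying the
braid relation of type `B₂`, `(s₁s₂)² = (s₂s₁)²`, and the cubic relations
`(sᵢ − q)(sᵢ² − 1) = 0` with `q ≠ 0`. If `s₁ v = q v` and `(s₂ − q)(s₂ − 1) v = 0`, then the
smallest subspace containing `v` and invariant under `s₁, s₂, s₁⁻¹, s₂⁻¹` is spanned by the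
seven vectors `v, s₂v, s₁s₂v, s₁⁻¹s₂v, s₂s₁s₂v, s₂s₁⁻¹s₂v, s₁s₂s₁⁻¹s₂v`; in particular it is
finite-dimensional of dimension at most `7`. -/
theorem stmt_13 {V : Type*} [AddCommGroup V] [Module ℂ V]
    (q : ℂ) (hq : q ≠ 0) (s₁ s₂ : V ≃ₗ[ℂ] V)
    (hbraid : ∀ x : V, s₁ (s₂ (s₁ (s₂ x))) = s₂ (s₁ (s₂ (s₁ x))))
    (hcub₁ : ∀ x : V, s₁ (s₁ (s₁ x)) - q • s₁ (s₁ x) - s₁ x + q • x = 0)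
    (hcub₂ : ∀ x : V, s₂ (s₂ (s₂ x)) - q • s₂ (s₂ x) - s₂ x + q • x = 0)
    (v : V)
    (h1 : s₁ v = q • v)
    (h2 : s₂ (s₂ v) - (q + 1) • s₂ v + q • v = 0) :
    sInf {U : Submodule ℂ V | v ∈ U ∧ ∀ x ∈ U,
        s₁ x ∈ U ∧ s₂ x ∈ U ∧ s₁.symm x ∈ U ∧ s₂.symm x ∈ U} =
      Submodule.span ℂ {v, s₂ v, s₁ (s₂ v), s₁.symm (s₂ v), s₂ (s₁ (s₂ v)),
        s₂ (s₁.symm (s₂ v)), s₁ (s₂ (s₁.symm (s₂ v)))} ∧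
    FiniteDimensional ℂ ↥(sInf {U : Submodule ℂ V | v ∈ U ∧ ∀ x ∈ U,
        s₁ x ∈ U ∧ s₂ x ∈ U ∧ s₁.symm x ∈ U ∧ s₂.symm x ∈ U}) ∧
    Module.finrank ℂ ↥(sInf {U : Submodule ℂ V | v ∈ U ∧ ∀ x ∈ U,
        s₁ x ∈ U ∧ s₂ x ∈ U ∧ s₁.symm x ∈ U ∧ s₂.symm x ∈ U}) ≤ 7 := by
  have h := stmt_13_general (α := q) (β := 1) (e := q + 1) hq.isUnit.neg hq.isUnit hq.isUnit.neg
    s₁ s₂ hbraid (fun u ↦ by linear_combination (norm := module) hcub₁ u) v h1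
    (by linear_combination (norm := module) h2)
  exact ⟨h.1, h.2.1, h.2.2.trans (by norm_num)⟩
end

section
/- Let V be a complex vector space and s₁, s₂ invertible linear operators on V such that (s₁s₂)² = (s₂s₁)² and (s₁ − q)(s₁² − 1) = 0, where q ∈ ℂ. Let v ∈ V be a nonzero vector such that s₁ v = q v, (s₂ − q)(s₂ − 1) v = 0, and (s₁s₂)² v = μ v for some constant μ ∈ ℂ. If q⁸ ≠ 1, then μ² ≠ 1. -/
/-!
Put `w = s₂ v`. If `w = l v`, then `l ∈ {q, 1}` and `μ = (q l)²`. Otherwise `v` and `w` are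
independent. As `s₁ s₂` is injective and sends `s₁ w` to `μ v` and `w - (q + 1) v` to `-q² v`, we
get `s₁ w = b (w - (q + 1) v)` with `b = -μ / q²`. So `s₁` is triangular on the span of `v` and `w`,
with eigenvalues `q` and `b`. By its cubic relation `b` is `±1` or `q`. If `b = q ≠ ±1`, then `q` is
a simple root of the cubic, so the off-diagonal entry `-q (q + 1)` would vanish, which it does not.
Hence `b² = 1`, and in all cases `μ` is `q⁴`, `q²` or `-q²`.
-/

section CommRing

variable {R M : Type*} [CommRing R] [AddCommGroup M] [Module R M]

theorem cubic_coeffs_eq_zero_of_upper_triangular {T : Module.End R M} {v w : M} {q a b : R}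
    (hvw : LinearIndependent R ![v, w]) (hv : T v = q • v) (hw : T w = a • v + b • w)
    (hcubic : T (T (T w)) - q • T (T w) - T w + q • w = 0) :
    a * (b ^ 2 - 1) = 0 ∧ (b - q) * (b ^ 2 - 1) = 0 := by
  apply LinearIndependent.pair_iff.mp hvw
  rw [← hcubic]
  simp only [hw, hv, map_add, map_smul]
  module

theorem sq_eq_one_of_apply_eq_smul_sub [IsDomain R] {T : Module.End R M} {v w : M} {q b : R}
    (hvw : LinearIndependent R ![v, w]) (hb : b ≠ 0)
    (hv : T v = q • v) (hw : T w = b • (w - (q + 1) • v))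
    (hcubic : T (T (T w)) - q • T (T w) - T w + q • w = 0) :
    b ^ 2 = 1 := by
  have hw_coords : T w = (-b * (q + 1)) • v + b • w := by
    rw [hw]
    module
  obtain ⟨hcoeff_v, hcoeff_w⟩ :=
    cubic_coeffs_eq_zero_of_upper_triangular hvw hv hw_coords hcubic
  by_contra hb_sq
  have hb_sub : b ^ 2 - 1 ≠ 0 := sub_ne_zero.mpr hb_sq
  have hbq : b = q := sub_eq_zero.mp ((mul_eq_zero.mp hcoeff_w).resolve_right hb_sub)
  have h_offdiag : -b * (q + 1) = 0 := (mul_eq_zero.mp hcoeff_v).resolve_right hb_sub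
  have hq_neg : q = -1 :=
    eq_neg_of_add_eq_zero_left ((mul_eq_zero.mp h_offdiag).resolve_left (neg_ne_zero.mpr hb))
  exact hb_sq (by rw [hbq, hq_neg, neg_one_sq])

theorem eq_pow_four_or_eq_sq_of_common_eigenvector [IsDomain R] [Module.IsTorsionFree R M]
    {s₁ s₂ : Module.End R M} {v : M} {q l μ : R} (hv : v ≠ 0)
    (h₁ : s₁ v = q • v) (hl : s₂ v = l • v)
    (h₂ : s₂ (s₂ v) - (q + 1) • s₂ v + q • v = 0)
    (hμ : s₁ (s₂ (s₁ (s₂ v))) = μ • v) :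
    μ = q ^ 4 ∨ μ = q ^ 2 := by
  have hl_root : (l - q) * (l - 1) = 0 := by
    refine (smul_eq_zero_iff_left hv).mp ?_
    rw [← h₂]
    simp only [hl, map_smul]
    module
  have hμ_eq : μ = (q * l) ^ 2 := by
    refine smul_left_injective R hv ?_
    simp only [← hμ, hl, h₁, map_smul]
    module
  rcases mul_eq_zero.mp hl_root with h | h
  · left
    rw [hμ_eq, sub_eq_zero.mp h]
    ring
  · right
    rw [hμ_eq, sub_eq_zero.mp h, mul_one]

end CommRing

section Field

variable {K V : Type*} [Field K] [AddCommGroup V] [Module K V]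
  {s₁ s₂ : Module.End K V} {v : V} {q μ : K}

theorem apply_apply_eq_smul_sub (hs₁ : Function.Injective s₁) (hs₂ : Function.Injective s₂)
    (hq : q ≠ 0) (h₁ : s₁ v = q • v)
    (h₂ : s₂ (s₂ v) - (q + 1) • s₂ v + q • v = 0)
    (hμ : s₁ (s₂ (s₁ (s₂ v))) = μ • v) :
    s₁ (s₂ v) = (-μ / q ^ 2) • (s₂ v - (q + 1) • v) := by
  have h_image : s₁ (s₂ (s₂ v - (q + 1) • v)) = (-q ^ 2) • v := by
    rw [map_sub, map_smul, eq_neg_of_add_eq_zero_left h₂, map_neg, map_smul, h₁]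
    module
  apply hs₂
  apply hs₁
  rw [hμ, map_smul, map_smul, h_image, smul_smul]
  congr 1
  field_simp

theorem eq_sq_or_eq_neg_sq_of_linearIndependent
    (hs₁ : Function.Injective s₁) (hs₂ : Function.Injective s₂)
    (hvw : LinearIndependent K ![v, s₂ v]) (h₁ : s₁ v = q • v)
    (hcubic : s₁ (s₁ (s₁ (s₂ v))) - q • s₁ (s₁ (s₂ v)) - s₁ (s₂ v) + q • s₂ v = 0)
    (h₂ : s₂ (s₂ v) - (q + 1) • s₂ v + q • v = 0)
    (hμ : s₁ (s₂ (s₁ (s₂ v))) = μ • v) :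
    μ = q ^ 2 ∨ μ = -q ^ 2 := by
  have hv : v ≠ 0 := hvw.ne_zero 0
  have hq : q ≠ 0 := by
    rintro rfl
    exact hv ((map_eq_zero_iff s₁ hs₁).mp (by rw [h₁, zero_smul]))
  have hw : s₁ (s₂ v) = (-μ / q ^ 2) • (s₂ v - (q + 1) • v) :=
    apply_apply_eq_smul_sub hs₁ hs₂ hq h₁ h₂ hμ
  have hb : -μ / q ^ 2 ≠ 0 := by
    intro hb
    rw [hb, zero_smul, map_eq_zero_iff s₁ hs₁] at hw
    exact hvw.ne_zero 1 hw
  have hb_sq : (-μ / q ^ 2) ^ 2 = 1 := sq_eq_one_of_apply_eq_smul_sub hvw hb h₁ hw hcubic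
  refine sq_eq_sq_iff_eq_or_eq_neg.mp ?_
  rwa [div_pow, neg_sq, div_eq_one_iff_eq (pow_ne_zero 2 (pow_ne_zero 2 hq))] at hb_sq

theorem eq_pow_four_or_eq_sq_or_eq_neg_sq
    (hs₁ : Function.Injective s₁) (hs₂ : Function.Injective s₂) (hv : v ≠ 0)
    (h₁ : s₁ v = q • v)
    (hcubic : s₁ (s₁ (s₁ (s₂ v))) - q • s₁ (s₁ (s₂ v)) - s₁ (s₂ v) + q • s₂ v = 0)
    (h₂ : s₂ (s₂ v) - (q + 1) • s₂ v + q • v = 0)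
    (hμ : s₁ (s₂ (s₁ (s₂ v))) = μ • v) :
    μ = q ^ 4 ∨ μ = q ^ 2 ∨ μ = -q ^ 2 := by
  by_cases hvw : LinearIndependent K ![v, s₂ v]
  · exact .inr (eq_sq_or_eq_neg_sq_of_linearIndependent hs₁ hs₂ hvw h₁ hcubic h₂ hμ)
  · obtain ⟨l, hl⟩ : ∃ l : K, l • v = s₂ v := by
      simpa only [LinearIndependent.pair_iff' hv, not_forall, not_not] using hvw
    exact (eq_pow_four_or_eq_sq_of_common_eigenvector hv h₁ hl.symm h₂ hμ).imp_right .inl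

theorem stmt_14_general
    (hs₁ : Function.Injective s₁) (hs₂ : Function.Injective s₂) (hv : v ≠ 0)
    (h₁ : s₁ v = q • v)
    (hcubic : s₁ (s₁ (s₁ (s₂ v))) - q • s₁ (s₁ (s₂ v)) - s₁ (s₂ v) + q • s₂ v = 0)
    (h₂ : s₂ (s₂ v) - (q + 1) • s₂ v + q • v = 0)
    (hμ : s₁ (s₂ (s₁ (s₂ v))) = μ • v) (hq : q ^ 8 ≠ 1) :
    μ ^ 2 ≠ 1 := by
  intro hμ_sq
  apply hq
  rcases eq_pow_four_or_eq_sq_or_eq_neg_sq hs₁ hs₂ hv h₁ hcubic h₂ hμ with rfl | rfl | rfl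
  · linear_combination hμ_sq
  · linear_combination (q ^ 4 + 1) * hμ_sq
  · linear_combination (q ^ 4 + 1) * hμ_sq

end Field

/-- Let `s₁, s₂` be invertible linear operators on a complex vector space with
`(s₁s₂)² = (s₂s₁)²` and `(s₁ − q)(s₁² − 1) = 0`. If `v ≠ 0` satisfies `s₁ v = q v`,
`(s₂ − q)(s₂ − 1) v = 0` and `(s₁s₂)² v = μ v`, and `q⁸ ≠ 1`, then `μ² ≠ 1`. -/
theorem stmt_14 {V : Type*} [AddCommGroup V] [Module ℂ V]
    (q μ : ℂ) (s₁ s₂ : V ≃ₗ[ℂ] V)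
    (hbraid : ∀ x : V, s₁ (s₂ (s₁ (s₂ x))) = s₂ (s₁ (s₂ (s₁ x))))
    (hcub : ∀ x : V, s₁ (s₁ (s₁ x)) - q • s₁ (s₁ x) - s₁ x + q • x = 0)
    (v : V) (hv : v ≠ 0)
    (h1 : s₁ v = q • v)
    (h2 : s₂ (s₂ v) - (q + 1) • s₂ v + q • v = 0)
    (hμ : s₁ (s₂ (s₁ (s₂ v))) = μ • v)
    (hq : q ^ 8 ≠ 1) :
    μ ^ 2 ≠ 1 :=
  stmt_14_general (s₁ := s₁.toLinearMap) (s₂ := s₂.toLinearMap) s₁.injective s₂.injective hv h1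
    (hcub (s₂ v)) h2 hμ hq
end

section
/- Let V be a complex vector space, q ∈ ℂ with q⁸ ≠ 1, and let s₁, s₂ be invertible linear endomorphisms of V satisfying (s₁s₂)² = (s₂s₁)² and (s_i − q)(s_i² − 1) = 0 for i = 1, 2 (a representation of the cubic Hecke algebra of type B₂). Let W be the dihedral group of order 8 with generators σ₁, σ₂ satisfying σ₁² = σ₂² = 1 and (σ₁σ₂)⁴ = 1, whose eight elements are 1, σ₁, σ₂, σ₁σ₂, σ₂σ₁, σ₁σ₂σ₁, σ₂σ₁σ₂ and σ₁σ₂σ₁σ₂ = σ₂σ₁σ₂σ₁. Define T : W → GL(V) by sending each of these elements to the corresponding alternating product of s₁ and s₂ (T(1) = id, T(σ₁) = s₁, T(σ₂) = s₂, T(σ₁σ₂) = s₁s₂, T(σ₂σ₁) = s₂s₁, T(σ₁σ₂σ₁) = s₁s₂s₁, T(σ₂σ₁σ₂) = s₂s₁s₂, T(σ₁σ₂σ₁σ₂) = s₁s₂s₁s₂; well defined since (s₁s₂)² = (s₂s₁)²). Let K be the space of families (x_w)_{w∈W} of vectors of V such that for i = 1, 2 and every w ∈ W, x_{σ_i w}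 − s_i(x_w) ∈ range(s_i² − 1), and for y ∈ W define i_y : V → K by i_y(v) = (T(w y⁻¹) v)_{w∈W}. Then every element of K is a sum Σ_{y∈W} i_y(v_y) for some vectors v_y ∈ V; that is, K is spanned by the images of the maps i_y, y ∈ W (every representation of the cubic Hecke algebra of type B₂ with q⁸ ≠ 1 is good). -/
/-- The operators `T(w)` for `w` in the dihedral group of order 8 (the Weyl group of type
`B₂`, with simple reflections `σ₁ = sr 0`, `σ₂ = sr 1`): each of the eight elements is sent
to the corresponding alternating product of `s₁` and `s₂`. -/
noncomputable def TB2 {k V : Type*} [Field k] [AddCommGroup V] [Module k V]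
    (s₁ s₂ : V →ₗ[k] V) (w : DihedralGroup 4) : V →ₗ[k] V :=
  if w = 1 then LinearMap.id
  else if w = DihedralGroup.sr 0 then s₁
  else if w = DihedralGroup.sr 1 then s₂
  else if w = DihedralGroup.sr 0 * DihedralGroup.sr 1 then s₁ ∘ₗ s₂
  else if w = DihedralGroup.sr 1 * DihedralGroup.sr 0 then s₂ ∘ₗ s₁
  else if w = DihedralGroup.sr 0 * DihedralGroup.sr 1 * DihedralGroup.sr 0 then s₁ ∘ₗ s₂ ∘ₗ s₁
  else if w = DihedralGroup.sr 1 * DihedralGroup.sr 0 * DihedralGroup.sr 1 then s₂ ∘ₗ s₁ ∘ₗ s₂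
  else s₁ ∘ₗ s₂ ∘ₗ s₁ ∘ₗ s₂

/-!
If `q ≠ 0`, the braid relation makes `D = (s₁ s₂) ^ 2` invertible and commute with `s₁` and `s₂`.
The centre of the centralizer of `D` is a commutative ring over which `s₁` and `s₂` are still
linear, and over which `D` is a unit scalar, written `q ^ 2 * r`.

The range of `sᵢ ^ 2 - 1` lies in the `q`-eigenspace `Vᵢ` of `sᵢ`. Place a family on the octagon,
the Cayley graph of `W`. Combining two translates of `u ∈ V₁` produces a family supported on the
arc `u, s₂ u, s₁ s₂ u, q r u`. Subtracting a translate and such arcs clears five vertices and leaves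
three consecutive entries `a`, `c`, `b`, with `a ∈ V₁` and `b ∈ V₂`. Modulo the pairs of outer
entries of explicit combinations of translates, the operators `(a, b) ↦ (p b, p' a)` and
`(a, b) ↦ (p (s₂ a), p' (s₁ b))`, where `p` and `p'` are the projections onto `V₁` and `V₂`, act by
scalars. The edge conditions then become two scalar equations killing the class of `(a, b)`, and
these are coprime because `2` and `q ^ 8 - 1` are units. Once `a` and `b` are cleared, the middle
entry lies in `V₁ ∩ V₂`, where everything is explicit.

If `q = 0`, then `sᵢ ^ 2 = 1` and a family is the translate of any of its entries.
-/

namespace CubicB2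

section Parameters

lemma inv_theta_of_eq {F : Type*} [Field F] {q k r θ : F}
    (hq : q * (q - k) = 1) (hθ₀ : θ ≠ 0) (hθ : q * r * k * θ = q ^ 2 * r ^ 2 - 1)
    (h₁ : (θ - 1) * (θ * (k * θ - q * r)) = (q - k + q * r) * θ ^ 2) :
    θ * (1 + r + q ^ 2 * r ^ 2) = 1 := by
  refine mul_left_cancel₀ hθ₀ ?_
  linear_combination (-q * r) * h₁ + (θ ^ 2 - θ) * hθ - r * θ ^ 2 * hq

lemma pow_eight_eq_one_of_pow_three {F : Type*} [Field F] {q r θ : F} (h2 : (2 : F) ≠ 0)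
    (hr : r ≠ 0) (h : q ^ 2 * r ^ 3 = 1) (hθ : θ * (1 + r + r ^ 2) = r)
    (heq : q ^ 2 * r ^ 2 * ((1 + θ) * (1 + r * θ + (q ^ 2 - 1) * θ ^ 2)) =
      θ ^ 2 * (q ^ 2 * r - 1) ^ 2) :
    q ^ 8 = 1 := by
  have hm : 1 + r + r ^ 2 ≠ 0 := right_ne_zero_of_mul (hθ.trans_ne hr)
  have θ_eq : θ = r / (1 + r + r ^ 2) := by rwa [eq_div_iff hm]
  have q_sq : q ^ 2 = 1 / r ^ 3 := by rwa [eq_div_iff (pow_ne_zero 3 hr)]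
  have roots : 2 * (1 + r) ^ 2 * (1 + r ^ 2) = 0 := by
    rw [q_sq, θ_eq] at heq
    field_simp at heq
    exact mul_left_cancel₀ hr (mul_left_cancel₀ hm (by linear_combination heq))
  have : 1 + r = 0 ∨ 1 + r ^ 2 = 0 := by simpa [h2] using roots
  rcases this with hr₁ | hr₁
  · obtain rfl : r = -1 := by linear_combination hr₁
    linear_combination (-(q ^ 6 - q ^ 4 + q ^ 2 - 1)) * h
  · have q_sq' : q ^ 2 = r := by linear_combination r * h - q ^ 2 * (r ^ 2 - 1) * hr₁
    linear_combination (q ^ 6 + q ^ 4 * r + q ^ 2 * r ^ 2 + r ^ 3) * q_sq' + (r ^ 2 - 1) * hr₁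

lemma pow_eight_eq_one_of_common_zero {F : Type*} [Field F] {q k r θ : F} (h2 : (2 : F) ≠ 0)
    (hq : q * (q - k) = 1) (hr : r ≠ 0) (hθ : q * r * k * θ = q ^ 2 * r ^ 2 - 1)
    (h₁ : (θ - 1) * (θ * (k * θ - q * r)) = (q - k + q * r) * θ ^ 2)
    (h₂ : (1 + θ) * (1 + r * θ + q * k * θ ^ 2) = (θ * (k * θ - q * r) + q * θ) ^ 2) :
    q ^ 8 = 1 := by
  have hθ₀ : θ ≠ 0 := by rintro rfl; norm_num at h₂
  have inv_θ : θ * (1 + r + q ^ 2 * r ^ 2) = 1 := inv_theta_of_eq hq hθ₀ hθ h₁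
  have factors : (q ^ 2 * r ^ 3 - 1) * (q ^ 2 * r + 1) = 0 := by
    linear_combination q * r * k * inv_θ - (1 + r + q ^ 2 * r ^ 2) * hθ - r * hq
  have eq_without_k : q ^ 2 * r ^ 2 * ((1 + θ) * (1 + r * θ + (q ^ 2 - 1) * θ ^ 2)) =
      θ ^ 2 * (q ^ 2 * r - 1) ^ 2 := by
    have : q * r * (θ * (k * θ - q * r) + q * θ) = θ * (q ^ 2 * r - 1) := by
      linear_combination θ * hθ
    rw [← mul_pow, ← mul_pow, ← this]
    linear_combination q ^ 2 * r ^ 2 * h₂ + q ^ 2 * r ^ 2 * (1 + θ) * θ ^ 2 * hq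
  rcases mul_eq_zero.1 factors with h | h
  · exact pow_eight_eq_one_of_pow_three h2 hr (sub_eq_zero.1 h)
      (by linear_combination r * inv_θ - θ * h) eq_without_k
  · obtain rfl : θ = 1 := by linear_combination inv_θ - θ * r * h
    have r_sq : r ^ 2 = -1 := by
      refine mul_left_cancel₀ h2 ?_
      linear_combination (2 * r ^ 2 + q ^ 2 * r + 1) * h - eq_without_k
    have q_pow_four : q ^ 4 = -1 := by linear_combination q ^ 4 * r_sq - (q ^ 2 * r - 1) * h
    linear_combination (q ^ 4 - 1) * q_pow_four

variable {R : Type*} [CommRing R] {q k r θ : R}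

lemma isCoprime_of_isUnit (h2 : IsUnit (2 : R)) (h8 : IsUnit (q ^ 8 - 1))
    (hq : q * (q - k) = 1) (hr : IsUnit r) (hθ : q * r * k * θ = q ^ 2 * r ^ 2 - 1) :
    IsCoprime ((θ - 1) * (θ * (k * θ - q * r)) - (q - k + q * r) * θ ^ 2)
      ((1 + θ) * (1 + r * θ + q * k * θ ^ 2) - (θ * (k * θ - q * r) + q * θ) ^ 2) := by
  rw [← Ideal.isCoprime_span_singleton_iff, Ideal.isCoprime_iff_sup_eq]
  by_contra hne
  obtain ⟨M, hM, hle⟩ := Ideal.exists_le_maximal _ hne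
  let _ := Ideal.Quotient.field M
  let π : R →+* R ⧸ M := Ideal.Quotient.mk M
  have π_eq_zero {a b : R} (h : Ideal.span {a - b} ≤ M) : π a = π b :=
    Ideal.Quotient.eq.2 (h (Ideal.mem_span_singleton_self _))
  have h₁ := π_eq_zero (le_sup_left.trans hle)
  have h₂ := π_eq_zero (le_sup_right.trans hle)
  have hq' := congrArg π hq
  have hθ' := congrArg π hθ
  simp only [map_mul, map_sub, map_add, map_pow, map_one] at h₁ h₂ hq' hθ'
  have q_pow : π q ^ 8 = 1 := pow_eight_eq_one_of_common_zero
    (by simpa only [map_ofNat] using (h2.map π).ne_zero) hq' (hr.map π).ne_zero hθ' h₁ h₂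
  exact (h8.map π).ne_zero (by simp [q_pow])

end Parameters

section Quotient

variable {R E : Type*} [CommRing R] [AddCommGroup E] [Module R E] {q k r θ : R}

-- In the quotient by the right-hand side, `n` and `S` act by scalars, so the three relations
-- become two coprime scalar equations killing the class of `x`.
lemma mem_range_sup_range (h2 : IsUnit (2 : R)) (h8 : IsUnit (q ^ 8 - 1))
    (hq : q * (q - k) = 1) (hr : IsUnit r) (hθ : q * r * k * θ = q ^ 2 * r ^ 2 - 1)
    {n S : Module.End R E} {x y : E}
    (hS : (θ - 1) • S x = (q - k + q * r) • n (n x))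
    (h₁ : y = S x - q • n x + n y)
    (h₂ : x + (q * k) • n (n x) + q • n y = r • n x + S y) :
    x ∈ LinearMap.range (θ • 1 + n) ⊔ LinearMap.range (S - k • n ^ 2 - (q * r) • n) := by
  set X := LinearMap.range (θ • 1 + n) ⊔ LinearMap.range (S - k • n ^ 2 - (q * r) • n)
  let π := X.mkQ
  have π_n (z : E) : π (n z) = -θ • π z := by
    have : π ((θ • 1 + n) z) = 0 :=
      (Submodule.Quotient.mk_eq_zero X).2 (Submodule.mem_sup_left ⟨z, rfl⟩)
    simp only [LinearMap.add_apply, LinearMap.smul_apply, Module.End.one_apply, map_add,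
      map_smul] at this
    linear_combination (norm := module) this
  have π_S (z : E) : π (S z) = (θ * (k * θ - q * r)) • π z := by
    have : π ((S - k • n ^ 2 - (q * r) • n) z) = 0 :=
      (Submodule.Quotient.mk_eq_zero X).2 (Submodule.mem_sup_right ⟨z, rfl⟩)
    simp only [LinearMap.sub_apply, LinearMap.smul_apply, sq, Module.End.mul_apply, map_sub,
      map_smul, π_n] at this
    linear_combination (norm := module) this
  have eq_S := congrArg π hS
  have eq_y := congrArg π h₁
  have eq_x := congrArg π h₂
  simp only [map_add, map_sub, map_smul, π_n, π_S] at eq_S eq_y eq_x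
  obtain ⟨a, b, hab⟩ := isCoprime_of_isUnit h2 h8 hq hr hθ
  refine (Submodule.Quotient.mk_eq_zero X).1 (?_ : π x = 0)
  have : (a * ((θ - 1) * (θ * (k * θ - q * r)) - (q - k + q * r) * θ ^ 2) + b *
      ((1 + θ) * (1 + r * θ + q * k * θ ^ 2) - (θ * (k * θ - q * r) + q * θ) ^ 2)) • π x = 0 := by
    linear_combination (norm := module) a • eq_S + (b * (1 + θ)) • eq_x +
      (b * (θ * (k * θ - q * r) + q * θ)) • eq_y
  rwa [hab, one_smul] at this

end Quotient

section Operators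

variable {R V : Type*} [CommRing R] [AddCommGroup V] [Module R V]

open Module.End (eigenspace)

/-- Two operators `s`, `t` on `V` satisfying `(s - q) (s ^ 2 - 1) = 0` and the braid relation of
type `B₂`, with `(s t) ^ 2` acting as the scalar `q ^ 2 * r`. Here `k = q - q⁻¹` and
`θ = (q ^ 2 * r ^ 2 - 1) / (q * r * k)`; the maps `p`, `p'` are the projections onto the
`q`-eigenspaces, so that the cubic relations read `s ^ 2 = 1 + (q ^ 2 - 1) p`. -/
structure CubicPair (q k r θ : R) (s t : Module.End R V)
    (p : V →ₗ[R] eigenspace s q) (p' : V →ₗ[R] eigenspace t q) : Prop where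
  isUnit_pow_sub_one : IsUnit (q ^ 8 - 1)
  isUnit_r : IsUnit r
  q_mul : q * (q - k) = 1
  theta_eq : q * r * k * θ = q ^ 2 * r ^ 2 - 1
  left_left : ∀ v, s (s v) = v + (q * k) • (p v : V)
  right_right : ∀ v, t (t v) = v + (q * k) • (p' v : V)
  left_braid : ∀ v, s (t (s (t v))) = (q ^ 2 * r) • v
  right_braid : ∀ v, t (s (t (s v))) = (q ^ 2 * r) • v

lemma apply_eigenspace {s : Module.End R V} {q : R} (u : eigenspace s q) :
    s u = q • (u : V) :=
  Module.End.mem_eigenspace_iff.1 u.2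

namespace CubicPair

variable {q k r θ : R} {s t : Module.End R V} {p : V →ₗ[R] eigenspace s q}
  {p' : V →ₗ[R] eigenspace t q} (h : CubicPair q k r θ s t p p')

include h

lemma swap : CubicPair q k r θ t s p' p where
  isUnit_pow_sub_one := h.isUnit_pow_sub_one
  isUnit_r := h.isUnit_r
  q_mul := h.q_mul
  theta_eq := h.theta_eq
  left_left := h.right_right
  right_right := h.left_left
  left_braid := h.right_braid
  right_braid := h.left_braid

lemma isUnit_q : IsUnit q := .of_mul_eq_one _ h.q_mul

lemma isUnit_q_mul_k : IsUnit (q * k) :=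
  isUnit_of_dvd_unit ⟨(q ^ 4 + 1) * (q ^ 2 + 1), by
    linear_combination ((q ^ 4 + 1) * (q ^ 2 + 1)) * h.q_mul⟩ h.isUnit_pow_sub_one

lemma isUnit_sq_add_one : IsUnit (q ^ 2 + 1) :=
  isUnit_of_dvd_unit ⟨(q ^ 4 + 1) * (q ^ 2 - 1), by ring⟩ h.isUnit_pow_sub_one

lemma isUnit_q_mul_r_mul_k : IsUnit (q * r * k) := by
  rw [mul_right_comm]; exact h.isUnit_q_mul_k.mul h.isUnit_r

lemma proj_left (v : V) : p (s v) = q • p v := by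
  refine h.isUnit_q_mul_k.smul_left_cancel.1 (Subtype.ext ?_)
  have := h.left_left (s v)
  rw [h.left_left v, map_add, map_smul, apply_eigenspace] at this
  simp only [Submodule.coe_smul]
  linear_combination (norm := module) -this

lemma proj_coe (u : eigenspace s q) : p u = u := by
  refine h.isUnit_q_mul_k.smul_left_cancel.1 (Subtype.ext ?_)
  have := h.left_left u
  rw [apply_eigenspace, map_smul, apply_eigenspace] at this
  simp only [Submodule.coe_smul]
  linear_combination (norm := module) -this + h.q_mul • (u : V)

lemma eq_left_sub {v w : V} (hvw : s v = w) : v = s w - k • (p w : V) := by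
  subst hvw
  rw [h.left_left, h.proj_left, Submodule.coe_smul]
  module

lemma right_left_right (u : eigenspace s q) : t (s (t u)) = (q * r) • (u : V) := by
  have := h.right_braid u
  rw [apply_eigenspace, map_smul, map_smul, map_smul] at this
  refine h.isUnit_q.smul_left_cancel.1 ?_
  linear_combination (norm := module) this

lemma right_left (v : eigenspace t q) :
    t (s v) = (q * r) • s v - (q * r * k) • (p v : V) := by
  rw [h.eq_left_sub (h.swap.right_left_right v), map_smul, map_smul, Submodule.coe_smul]
  module

lemma proj_right_left (v : eigenspace t q) : p (t (s v)) = r • p v := by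
  rw [h.right_left, map_sub, map_smul, map_smul, h.proj_left, h.proj_coe]
  linear_combination (norm := module) (r * h.q_mul) • p (v : V)

lemma right_proj_add (v : eigenspace t q) :
    t (p v) + (p' (s v) : V) - k • (p' (p v : V) : V) = θ • s v - (q * r) • (p v : V) := by
  have := h.swap.eq_left_sub (h.right_left v)
  simp only [map_sub, map_smul, Submodule.coe_sub, Submodule.coe_smul, h.right_left v] at this
  refine h.isUnit_q_mul_r_mul_k.smul_left_cancel.1 ?_
  linear_combination (norm := module) this - h.theta_eq • s (v : V)

lemma proj'_left (v : eigenspace t q) :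
    (θ - 1) • p' (s v) = (q - k + q * r) • p' (p v : V) := by
  have := congrArg p' (h.right_proj_add v)
  simp only [map_add, map_sub, map_smul, h.swap.proj_left, h.swap.proj_coe] at this
  linear_combination (norm := module) -this

end CubicPair

/-- The operator `(a, b) ↦ (p b, p' a)` exchanging the two eigenspaces. -/
def exchange {V₁ V₂ : Submodule R V} (p : V →ₗ[R] V₁) (p' : V →ₗ[R] V₂) :
    Module.End R (V₁ × V₂) :=
  (p ∘ₗ V₂.subtype ∘ₗ LinearMap.snd R V₁ V₂).prod (p' ∘ₗ V₁.subtype ∘ₗ LinearMap.fst R V₁ V₂)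

/-- The diagonal operator `(a, b) ↦ (p (t a), p' (s b))`. -/
def compression (s t : Module.End R V) {V₁ V₂ : Submodule R V}
    (p : V →ₗ[R] V₁) (p' : V →ₗ[R] V₂) : Module.End R (V₁ × V₂) :=
  (p ∘ₗ t ∘ₗ V₁.subtype).prodMap (p' ∘ₗ s ∘ₗ V₂.subtype)

@[simp]
lemma exchange_apply {V₁ V₂ : Submodule R V} (p : V →ₗ[R] V₁) (p' : V →ₗ[R] V₂) (x : V₁ × V₂) :
    exchange p p' x = (p x.2, p' x.1) := rfl

@[simp]
lemma compression_apply (s t : Module.End R V) {V₁ V₂ : Submodule R V}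
    (p : V →ₗ[R] V₁) (p' : V →ₗ[R] V₂) (x : V₁ × V₂) :
    compression s t p p' x = (p (t x.1), p' (s x.2)) := rfl

namespace CubicPair

variable {q k r θ : R} {s t : Module.End R V} {p : V →ₗ[R] eigenspace s q}
  {p' : V →ₗ[R] eigenspace t q} (h : CubicPair q k r θ s t p p')

include h

lemma compression_eq_exchange_sq (x : eigenspace s q × eigenspace t q) :
    (θ - 1) • compression s t p p' x = (q - k + q * r) • exchange p p' (exchange p p' x) :=
  Prod.ext (h.swap.proj'_left x.1) (h.proj'_left x.2)

lemma eq_proj_of_overlap {a α : eigenspace s q} {b β : eigenspace t q}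
    (hc : t a + (β : V) = s b + α) : α = p (t a) - q • p b + p β := by
  have := congrArg p hc
  simp only [map_add, h.proj_left, h.proj_coe] at this
  linear_combination (norm := module) -this

lemma add_proj_of_overlap {a α : eigenspace s q} {b β : eigenspace t q}
    (hc : t a + (β : V) = s b + α) :
    a + (q * k) • p (p' a : V) + q • p β = r • p b + p (t α) := by
  have := congrArg (fun z => p (t z)) hc
  simp only [map_add, h.right_right, h.proj_right_left, h.proj_coe, apply_eigenspace,
    map_smul] at this
  exact this

-- `α = c - s b` and `β = c - t a`: the two expressions of `c` give the relations between `(a, b)`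
-- and `(α, β)` to which `mem_range_sup_range` applies.
lemma mem_range_of_overlap (h2 : IsUnit (2 : R)) {a α : eigenspace s q} {b β : eigenspace t q}
    (hc : t a + (β : V) = s b + α) :
    (a, b) ∈ LinearMap.range (θ • 1 + exchange p p') ⊔ LinearMap.range
      (compression s t p p' - k • exchange p p' ^ 2 - (q * r) • exchange p p') :=
  mem_range_sup_range h2 h.isUnit_pow_sub_one h.q_mul h.isUnit_r h.theta_eq (y := (α, β))
    (h.compression_eq_exchange_sq _)
    (Prod.ext (h.eq_proj_of_overlap hc) (h.swap.eq_proj_of_overlap hc.symm))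
    (Prod.ext (h.add_proj_of_overlap hc) (h.swap.add_proj_of_overlap hc.symm))

end CubicPair

end Operators

section Octagon

variable {R V : Type*} [CommRing R] [AddCommGroup V] [Module R V]

open Module.End (eigenspace)

/-- The alternating products of `s` and `t`, in the cyclic order of the Cayley graph of the dihedral
group of order 8: `Fin 8` stands for `1, σ₁, σ₂σ₁, σ₁σ₂σ₁, σ₁σ₂σ₁σ₂, σ₂σ₁σ₂, σ₁σ₂, σ₂`. -/
def alternating (s t : Module.End R V) : Fin 8 → Module.End R V :=
  ![1, s, t * s, s * t * s, s * t * s * t, t * s * t, s * t, t]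

/-- Left multiplication by `σ₁` on the octagon. -/
def leftMul₁ : Fin 8 → Fin 8 := ![1, 0, 3, 2, 5, 4, 7, 6]

/-- Left multiplication by `σ₂` on the octagon. -/
def leftMul₂ : Fin 8 → Fin 8 := ![7, 2, 1, 4, 3, 6, 5, 0]

/-- Right division by the `j`-th element on the octagon. -/
def rightDiv (j i : Fin 8) : Fin 8 := if j.val % 2 = 0 then i - j else j - i

/-- The `j`-th map `i_y : V → K`, that is, `v ↦ (T (w y⁻¹) v)_w`. -/
def translate (s t : Module.End R V) (j : Fin 8) : V →ₗ[R] (Fin 8 → V) :=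
  LinearMap.pi fun i => alternating s t (rightDiv j i)

lemma translate_apply (s t : Module.End R V) (j : Fin 8) (v : V) :
    translate s t j v = fun i => alternating s t (rightDiv j i) v := rfl

/-- The subspace of families generated by the images of the maps `i_y`. -/
def translates (s t : Module.End R V) : Submodule R (Fin 8 → V) :=
  ⨆ j, LinearMap.range (translate s t j)

lemma translate_mem (s t : Module.End R V) (j : Fin 8) (v : V) :
    translate s t j v ∈ translates s t :=
  Submodule.mem_iSup_of_mem j ⟨v, rfl⟩

lemma translates_le {s t : Module.End R V} {N : Submodule R (Fin 8 → V)}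
    (hN : ∀ j v, translate s t j v ∈ N) : translates s t ≤ N :=
  iSup_le fun j => by rintro _ ⟨v, rfl⟩; exact hN j v

lemma comp_rightDiv_mem {s t : Module.End R V} {x : Fin 8 → V} (hx : x ∈ translates s t)
    (j : Fin 8) : (fun i => x (rightDiv j i)) ∈ translates s t := by
  refine translates_le (N := (translates s t).comap (LinearMap.funLeft R V (rightDiv j)))
    (fun l v => ?_) hx
  have rightDiv_comp : ∀ l j, ∃ m, ∀ i, rightDiv l (rightDiv j i) = rightDiv m i := by decide
  obtain ⟨m, hm⟩ := rightDiv_comp l j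
  have : LinearMap.funLeft R V (rightDiv j) (translate s t l v) = translate s t m v :=
    funext fun i => congrArg (fun a => alternating s t a v) (hm i)
  exact Submodule.mem_comap.2 (this ▸ translate_mem s t m v)

lemma comp_neg_eq {α : Type*} (f : Fin 8 → α) :
    (fun i => f (-i)) = ![f 0, f 7, f 6, f 5, f 4, f 3, f 2, f 1] :=
  List.ofFn_injective rfl

lemma comp_neg_mem {s t : Module.End R V} (hst : s * t * s * t = t * s * t * s) {x : Fin 8 → V}
    (hx : x ∈ translates t s) : (fun i => x (-i)) ∈ translates s t := by
  refine translates_le (N := (translates s t).comap (LinearMap.funLeft R V Neg.neg))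
    (fun l v => ?_) hx
  have neg_rightDiv : ∀ l i, -rightDiv l (-i) = rightDiv (-l) i := by decide
  have alternating_swap (i : Fin 8) : alternating t s i = alternating s t (-i) := by
    have : alternating t s = fun i => alternating s t (-i) := by
      simp [comp_neg_eq, alternating, hst]
    exact congrFun this i
  have : LinearMap.funLeft R V Neg.neg (translate t s l v) = translate s t (-l) v := by
    ext i
    simp only [LinearMap.funLeft_apply, translate_apply, alternating_swap, neg_rightDiv]
  exact Submodule.mem_comap.2 (this ▸ translate_mem s t (-l) v)

/-- The space `K` of families whose differences along the edges of the octagon lie in `V₁`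
and `V₂`. -/
def compatible (s t : Module.End R V) (V₁ V₂ : Submodule R V) : Submodule R (Fin 8 → V) :=
  let e (i : Fin 8) : (Fin 8 → V) →ₗ[R] V := LinearMap.proj i
  ⨅ i, V₁.comap (e (leftMul₁ i) - s ∘ₗ e i) ⊓ V₂.comap (e (leftMul₂ i) - t ∘ₗ e i)

lemma mem_compatible {s t : Module.End R V} {V₁ V₂ : Submodule R V} {x : Fin 8 → V} :
    x ∈ compatible s t V₁ V₂ ↔
      ∀ i, x (leftMul₁ i) - s (x i) ∈ V₁ ∧ x (leftMul₂ i) - t (x i) ∈ V₂ := by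
  simp [compatible]

lemma translates_le_compatible {s t : Module.End R V} {V₁ V₂ : Submodule R V}
    (hst : s * t * s * t = t * s * t * s) (hs : ∀ v, v - s (s v) ∈ V₁)
    (ht : ∀ v, v - t (t v) ∈ V₂) : translates s t ≤ compatible s t V₁ V₂ := by
  have leftMul₁_rightDiv : ∀ j i, leftMul₁ (rightDiv j i) = rightDiv j (leftMul₁ i) := by decide
  have leftMul₂_rightDiv : ∀ j i, leftMul₂ (rightDiv j i) = rightDiv j (leftMul₂ i) := by decide
  have braid (v : V) : s (t (s (t v))) = t (s (t (s v))) := LinearMap.congr_fun hst v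
  have edge (v : V) (i : Fin 8) :
      alternating s t (leftMul₁ i) v - s (alternating s t i v) ∈ V₁ ∧
        alternating s t (leftMul₂ i) v - t (alternating s t i v) ∈ V₂ := by
    fin_cases i
    on_goal 5 => exact ⟨hs _, by simpa [leftMul₂, alternating, braid v] using ht (s (t (s v)))⟩
    all_goals simp [leftMul₁, leftMul₂, alternating, hs, ht, braid]
  refine translates_le fun j v => mem_compatible.2 fun i => ?_
  simp only [translate_apply, ← leftMul₁_rightDiv, ← leftMul₂_rightDiv]
  exact edge v _

namespace CubicPair

variable {q k r θ : R} {s t : Module.End R V} {p : V →ₗ[R] eigenspace s q}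
  {p' : V →ₗ[R] eigenspace t q} (h : CubicPair q k r θ s t p p')

include h

lemma braid : s * t * s * t = t * s * t * s :=
  LinearMap.ext fun v => (h.left_braid v).trans (h.right_braid v).symm

lemma sub_left_left_mem (v : V) : v - s (s v) ∈ eigenspace s q := by
  rw [h.left_left, sub_add_cancel_left, ← Submodule.coe_smul]
  exact neg_mem (Subtype.prop _)

lemma translates_le_compatible :
    translates s t ≤ compatible s t (eigenspace s q) (eigenspace t q) :=
  CubicB2.translates_le_compatible h.braid h.sub_left_left_mem h.swap.sub_left_left_mem

lemma arc_mem (u : eigenspace s q) :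
    ![0, (u : V), t u, s (t u), (q * r) • (u : V), 0, 0, 0] ∈ translates s t := by
  have arc_eq : -(q * k) • ![0, (u : V), t u, s (t u), (q * r) • (u : V), 0, 0, 0] =
      translate s t 1 u - q • translate s t 0 u := by
    have sub_q_sq (v : V) : -((q * k) • v) = v - q • q • v := by
      linear_combination (norm := module) h.q_mul • v
    ext i
    fin_cases i <;> simp [translate_apply, rightDiv, alternating, apply_eigenspace,
      h.right_left_right, sub_q_sq, smul_comm (q * r) q]
  rw [← Submodule.smul_mem_iff_of_isUnit _ h.isUnit_q_mul_k.neg, arc_eq]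
  exact sub_mem (translate_mem s t 1 _) (Submodule.smul_mem _ q (translate_mem s t 0 _))

lemma arc_three_mem (u : eigenspace s q) :
    ![0, 0, 0, (u : V), t u, s (t u), (q * r) • (u : V), 0] ∈ translates s t := by
  convert comp_rightDiv_mem (h.arc_mem u) 2 using 1
  ext i
  fin_cases i <;> rfl

lemma arc_six_mem (u : eigenspace s q) :
    ![0, 0, 0, (q * r) • (u : V), s (t u), t u, (u : V), 0] ∈ translates s t := by
  convert comp_rightDiv_mem (h.arc_mem u) 7 using 1
  ext i
  fin_cases i <;> rfl

lemma arc_seven_mem (v : eigenspace t q) :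
    ![0, 0, 0, 0, (q * r) • (v : V), t (s v), s v, (v : V)] ∈ translates s t := by
  simpa [comp_neg_eq] using comp_neg_mem h.braid (h.swap.arc_mem v)

lemma arc_two_mem (v : eigenspace t q) :
    ![0, 0, (v : V), s v, t (s v), (q * r) • (v : V), 0, 0] ∈ translates s t := by
  convert comp_rightDiv_mem (h.arc_seven_mem v) 1 using 1
  ext i
  fin_cases i <;> rfl

lemma crossing_mem (u : eigenspace s q) :
    ![0, 0, 0, θ • (u : V), θ • t u - (q * r) • (p' u : V), (p' u : V), 0, 0] ∈
      translates s t := by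
  have arc_sub_arc : -(q * r * k) •
      ![0, 0, 0, θ • (u : V), θ • t u - (q * r) • (p' u : V), (p' u : V), 0, 0] =
      ![0, 0, 0, (u : V), t u, s (t u), (q * r) • (u : V), 0] -
        (q * r) • ![0, 0, 0, (q * r) • (u : V), s (t u), t u, (u : V), 0] := by
    have sub_sq_smul (v : V) : v - (q * r) • (q * r) • v = -((q * r * k) • θ • v) := by
      linear_combination (norm := module) h.theta_eq • v
    have entry_four : t u - (q * r) • s (t u) =
        -((q * r * k) • (θ • t u - (q * r) • (p' u : V))) := by
      linear_combination (norm := module) sub_sq_smul (t u) - (q * r) • h.swap.right_left u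
    have entry_five : s (t u) - (q * r) • t u = -((q * r * k) • (p' u : V)) := by
      linear_combination (norm := module) h.swap.right_left u
    ext i
    fin_cases i <;> simp [sub_sq_smul, entry_four, entry_five]
  rw [← Submodule.smul_mem_iff_of_isUnit _ h.isUnit_q_mul_r_mul_k.neg, arc_sub_arc]
  exact sub_mem (h.arc_three_mem u) (Submodule.smul_mem _ _ (h.arc_six_mem u))

lemma crossing_swap_mem (v : eigenspace t q) :
    ![0, 0, 0, (p v : V), θ • s v - (q * r) • (p v : V), θ • (v : V), 0, 0] ∈
      translates s t := by
  simpa [comp_neg_eq] using comp_neg_mem h.braid (h.swap.crossing_mem v)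

lemma crossing_sub_arc_mem (u : eigenspace s q) :
    ![0, 0, 0, (p (t u) : V) - k • (p (p' u : V) : V), θ • (u : V) - t (s (p' u)),
      -((q * r) • (p' u : V)), 0, 0] ∈ translates s t := by
  convert sub_mem (comp_rightDiv_mem (h.crossing_mem u) 7) (h.arc_two_mem (p' u)) using 1
  have entry_three : (p (t u) : V) - k • (p (p' u : V) : V) =
      θ • t u - (q * r) • (p' u : V) - s (p' u) := by
    linear_combination (norm := module) h.swap.right_proj_add u
  ext i
  fin_cases i <;> simp [rightDiv, entry_three]

lemma crossing_sub_arc_swap_mem (v : eigenspace t q) :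
    ![0, 0, 0, -((q * r) • (p v : V)), θ • (v : V) - s (t (p v)),
      (p' (s v) : V) - k • (p' (p v : V) : V), 0, 0] ∈ translates s t := by
  simpa [comp_neg_eq] using comp_neg_mem h.braid (h.swap.crossing_sub_arc_mem v)

lemma exists_mem_translates {x : eigenspace s q × eigenspace t q}
    (hx : x ∈ LinearMap.range (θ • 1 + exchange p p') ⊔ LinearMap.range
      (compression s t p p' - k • exchange p p' ^ 2 - (q * r) • exchange p p')) :
    ∃ y ∈ translates s t, y = ![0, 0, 0, (x.1 : V), y 4, (x.2 : V), 0, 0] := by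
  obtain ⟨_, ⟨v, rfl⟩, _, ⟨w, rfl⟩, rfl⟩ := Submodule.mem_sup.1 hx
  refine ⟨_, add_mem (add_mem (h.crossing_mem v.1) (h.crossing_swap_mem v.2))
    (add_mem (h.crossing_sub_arc_mem w.1) (h.crossing_sub_arc_swap_mem w.2)), ?_⟩
  ext i
  fin_cases i <;> (simp [sq, sub_eq_add_neg]; try abel)

section MemInf

variable {w : V} (hs : w ∈ eigenspace s q) (ht : w ∈ eigenspace t q)

include hs

lemma proj_of_mem : (p w : V) = w := congrArg Subtype.val (h.proj_coe ⟨w, hs⟩)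

include ht

lemma r_smul_of_mem : r • w = q ^ 2 • w := by
  rw [Module.End.mem_eigenspace_iff] at hs ht
  have := h.left_braid w
  simp only [hs, ht, map_smul] at this
  refine (h.isUnit_q.pow 2).smul_left_cancel.1 ?_
  linear_combination (norm := module) -this

lemma theta_smul_of_mem : (q ^ 2 * θ) • w = (q ^ 4 + q ^ 2 + 1) • w := by
  refine h.isUnit_q_mul_k.smul_left_cancel.1 ?_
  linear_combination (norm := module) (q ^ 2 * r + q ^ 4 - q * k * θ) • h.r_smul_of_mem hs ht +
    h.theta_eq • w + ((q ^ 4 + q ^ 2 + 1) * h.q_mul) • w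

lemma crossing_add_swap_mem :
    ![0, 0, 0, (q ^ 2 + 1) • w, (2 * q) • w, (q ^ 2 + 1) • w, 0, 0] ∈ translates s t := by
  rw [← Submodule.smul_mem_iff_of_isUnit _ h.isUnit_sq_add_one]
  convert Submodule.smul_mem _ (q ^ 2)
    (add_mem (h.crossing_mem ⟨w, hs⟩) (h.crossing_swap_mem ⟨w, ht⟩)) using 1
  have outer : (q ^ 2 + 1) • (q ^ 2 + 1) • w = q ^ 2 • θ • w + q ^ 2 • w := by
    linear_combination (norm := module) -h.theta_smul_of_mem hs ht
  have middle : (q ^ 2 + 1) • (2 * q) • w =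
      q ^ 2 • (θ • q • w - (q * r) • w) + q ^ 2 • (θ • q • w - (q * r) • w) := by
    linear_combination (norm := module) (2 * q ^ 3) • h.r_smul_of_mem hs ht -
      (2 * q) • h.theta_smul_of_mem hs ht
  ext i
  fin_cases i <;> simp [h.proj_of_mem hs, h.swap.proj_of_mem ht,
    Module.End.mem_eigenspace_iff.1 hs, Module.End.mem_eigenspace_iff.1 ht, outer, middle,
    add_comm (q ^ 2 • w)]

lemma crossing_sub_arc_add_swap_mem :
    ![0, 0, 0, (q - q ^ 3) • w, (2 : R) • w, (q - q ^ 3) • w, 0, 0] ∈ translates s t := by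
  rw [← Submodule.smul_mem_iff_of_isUnit _ h.isUnit_sq_add_one]
  convert Submodule.smul_mem _ (q ^ 2)
    (add_mem (h.crossing_sub_arc_mem ⟨w, hs⟩) (h.crossing_sub_arc_swap_mem ⟨w, ht⟩)) using 1
  have outer : (q ^ 2 + 1) • (q - q ^ 3) • w =
      q ^ 2 • (q • w - k • w) + -(q ^ 2 • (q * r) • w) := by
    linear_combination (norm := module) q ^ 3 • h.r_smul_of_mem hs ht - (q * h.q_mul) • w
  have middle : (q ^ 2 + 1) • (2 : R) • w =
      q ^ 2 • (θ • w - q • q • w) + q ^ 2 • (θ • w - q • q • w) := by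
    linear_combination (norm := module) -(2 : R) • h.theta_smul_of_mem hs ht
  ext i
  fin_cases i <;> simp [h.proj_of_mem hs, h.swap.proj_of_mem ht,
    Module.End.mem_eigenspace_iff.1 hs, Module.End.mem_eigenspace_iff.1 ht, outer, middle,
    add_comm (-(q ^ 2 • (q * r) • w))]

lemma middle_mem (h2 : IsUnit (2 : R)) : ![0, 0, 0, 0, w, 0, 0, 0] ∈ translates s t := by
  have isUnit_coeff : IsUnit (2 * (q ^ 4 + 1)) :=
    h2.mul <| isUnit_of_dvd_unit ⟨q ^ 4 - 1, by ring⟩ h.isUnit_pow_sub_one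
  rw [← Submodule.smul_mem_iff_of_isUnit _ isUnit_coeff]
  convert sub_mem
    (Submodule.smul_mem _ (q ^ 2 + 1) (h.crossing_sub_arc_add_swap_mem hs ht))
    (Submodule.smul_mem _ (q - q ^ 3) (h.crossing_add_swap_mem hs ht)) using 1
  ext i
  fin_cases i <;> simp <;> module

end MemInf

lemma supported_mem (h2 : IsUnit (2 : R)) {x : Fin 8 → V}
    (hx : x ∈ compatible s t (eigenspace s q) (eigenspace t q))
    (x_eq : x = ![0, 0, 0, x 3, x 4, x 5, 0, 0]) : x ∈ translates s t := by
  have edge := mem_compatible.1 hx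
  have mem₃ : x 3 ∈ eigenspace s q := by simpa [leftMul₁, congrFun x_eq 2] using (edge 2).1
  have mem₅ : x 5 ∈ eigenspace t q := by simpa [leftMul₂, congrFun x_eq 6] using (edge 6).2
  have overlap : t (x 3) + (x 4 - t (x 3)) = s (x 5) + (x 4 - s (x 5)) := by abel
  obtain ⟨y, hy, y_eq⟩ := h.exists_mem_translates (h.mem_range_of_overlap h2
    (a := ⟨x 3, mem₃⟩) (b := ⟨x 5, mem₅⟩) (α := ⟨_, (edge 5).1⟩) (β := ⟨_, (edge 3).2⟩) overlap)
  have sub_eq : x - y = ![0, 0, 0, 0, x 4 - y 4, 0, 0, 0] := by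
    rw [x_eq, y_eq]
    ext i
    fin_cases i <;> simp
  have edge' := mem_compatible.1 (sub_mem hx (h.translates_le_compatible hy))
  refine (Submodule.sub_mem_iff_left _ hy).1 ?_
  rw [sub_eq] at edge' ⊢
  exact h.middle_mem (by simpa [leftMul₁] using (edge' 5).1)
    (by simpa [leftMul₂] using (edge' 3).2) h2

lemma mem_of_zero_one_seven (h2 : IsUnit (2 : R)) {x : Fin 8 → V}
    (hx : x ∈ compatible s t (eigenspace s q) (eigenspace t q))
    (h₀ : x 0 = 0) (h₁ : x 1 = 0) (h₇ : x 7 = 0) : x ∈ translates s t := by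
  have edge := mem_compatible.1 hx
  have mem₂ : x 2 ∈ eigenspace t q := by simpa [leftMul₂, h₁] using (edge 1).2
  have mem₆ : x 6 ∈ eigenspace s q := by simpa [leftMul₁, h₇] using (edge 7).1
  have hy := add_mem (h.arc_two_mem ⟨x 2, mem₂⟩) (h.arc_six_mem ⟨x 6, mem₆⟩)
  refine (Submodule.sub_mem_iff_left _ hy).1
    (h.supported_mem h2 (sub_mem hx (h.translates_le_compatible hy)) ?_)
  ext i
  fin_cases i <;> simp [h₀, h₁, h₇]

lemma mem_of_zero (h2 : IsUnit (2 : R)) {x : Fin 8 → V}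
    (hx : x ∈ compatible s t (eigenspace s q) (eigenspace t q)) (h₀ : x 0 = 0) :
    x ∈ translates s t := by
  have edge := mem_compatible.1 hx
  have mem₁ : x 1 ∈ eigenspace s q := by simpa [leftMul₁, h₀] using (edge 0).1
  have mem₇ : x 7 ∈ eigenspace t q := by simpa [leftMul₂, h₀] using (edge 0).2
  have hy := add_mem (h.arc_mem ⟨x 1, mem₁⟩) (h.arc_seven_mem ⟨x 7, mem₇⟩)
  refine (Submodule.sub_mem_iff_left _ hy).1
    (h.mem_of_zero_one_seven h2 (sub_mem hx (h.translates_le_compatible hy)) ?_ ?_ ?_) <;>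
  simp [h₀]

theorem compatible_eq_translates (h2 : IsUnit (2 : R)) :
    compatible s t (eigenspace s q) (eigenspace t q) = translates s t := by
  refine le_antisymm (fun x hx => ?_) h.translates_le_compatible
  have hy := translate_mem s t 0 (x 0)
  refine (Submodule.sub_mem_iff_left _ hy).1
    (h.mem_of_zero h2 (sub_mem hx (h.translates_le_compatible hy)) ?_)
  simp [translate_apply, rightDiv, alternating]

end CubicPair

lemma range_sq_sub_one_le {q : R} {s : Module.End R V}
    (hs : (s - q • 1) * (s * s - 1) = 0) : LinearMap.range (s * s - 1) ≤ eigenspace s q := by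
  rintro _ ⟨v, rfl⟩
  exact Module.End.mem_eigenspace_iff.2 (sub_eq_zero.1 (LinearMap.congr_fun hs v))

/-- The projection `(q ^ 2 - 1)⁻¹ (s ^ 2 - 1)` onto the `q`-eigenspace of an operator `s` with
`(s - q) (s ^ 2 - 1) = 0`, where `c` stands for `(q ^ 2 - 1)⁻¹`. -/
def cubicProj (c : R) {q : R} {s : Module.End R V}
    (hs : (s - q • 1) * (s * s - 1) = 0) : V →ₗ[R] eigenspace s q :=
  (c • (s * s - 1)).codRestrict _ fun v => Submodule.smul_mem _ c <|
    range_sq_sub_one_le hs ⟨v, rfl⟩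

lemma left_left_cubicProj {c q k : R} (hc : q * k * c = 1) {s : Module.End R V}
    (hs : (s - q • 1) * (s * s - 1) = 0) (v : V) :
    s (s v) = v + (q * k) • (cubicProj c hs v : V) := by
  change s (s v) = v + (q * k) • c • (s (s v) - v)
  rw [smul_smul, hc, one_smul, add_sub_cancel]

lemma compatible_mono {s t : Module.End R V} {V₁ V₂ W₁ W₂ : Submodule R V} (h₁ : V₁ ≤ W₁)
    (h₂ : V₂ ≤ W₂) : compatible s t V₁ V₂ ≤ compatible s t W₁ W₂ := fun _ hx =>
  mem_compatible.2 fun i => (mem_compatible.1 hx i).imp (@h₁ _) (@h₂ _)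

theorem compatible_le_translates_of_eq_smul_one {q d : R} (h2 : IsUnit (2 : R))
    (h8 : IsUnit (q ^ 8 - 1)) (hq : IsUnit q) (hd : IsUnit d) {s t : Module.End R V}
    (hs : (s - q • 1) * (s * s - 1) = 0) (ht : (t - q • 1) * (t * t - 1) = 0)
    (hst : s * t * s * t = d • 1) (hts : t * s * t * s = d • 1) :
    compatible s t (LinearMap.range (s * s - 1)) (LinearMap.range (t * t - 1)) ≤
      translates s t := by
  obtain ⟨q', hq'⟩ := hq.exists_right_inv
  have hk : q * (q - q') = q ^ 2 - 1 := by linear_combination -hq'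
  have isUnit_qk : IsUnit (q * (q - q')) := hk ▸
    isUnit_of_dvd_unit ⟨(q ^ 2 + 1) * (q ^ 4 + 1), by ring⟩ h8
  obtain ⟨c, hc⟩ := isUnit_qk.exists_right_inv
  have isUnit_r : IsUnit (q' ^ 2 * d) := ((IsUnit.of_mul_eq_one_right _ hq').pow 2).mul hd
  have hr : q ^ 2 * (q' ^ 2 * d) = d := by linear_combination (q * q' + 1) * d * hq'
  obtain ⟨θ, hθ⟩ := (isUnit_qk.mul isUnit_r).dvd (a := q ^ 2 * (q' ^ 2 * d) ^ 2 - 1)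
  have pair : CubicPair q (q - q') (q' ^ 2 * d) θ s t (cubicProj c hs) (cubicProj c ht) :=
    { isUnit_pow_sub_one := h8
      isUnit_r := isUnit_r
      q_mul := by rwa [sub_sub_cancel]
      theta_eq := by rw [hθ]; ring
      left_left := left_left_cubicProj hc hs
      right_right := left_left_cubicProj hc ht
      left_braid := fun v => by rw [hr]; exact LinearMap.congr_fun hst v
      right_braid := fun v => by rw [hr]; exact LinearMap.congr_fun hts v }
  exact (compatible_mono (range_sq_sub_one_le hs) (range_sq_sub_one_le ht)).trans
    (pair.compatible_eq_translates h2).le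

lemma compatible_bot_le_translates (s t : Module.End R V) :
    compatible s t ⊥ ⊥ ≤ translates s t := by
  intro x hx
  simp only [mem_compatible, Submodule.mem_bot, sub_eq_zero] at hx
  have x₁ : x 1 = s (x 0) := (hx 0).1
  have x₂ : x 2 = t (x 1) := (hx 1).2
  have x₃ : x 3 = s (x 2) := (hx 2).1
  have x₇ : x 7 = t (x 0) := (hx 0).2
  have x₆ : x 6 = s (x 7) := (hx 7).1
  have x₅ : x 5 = t (x 6) := (hx 6).2
  have x₄ : x 4 = s (x 5) := (hx 5).1
  have eq_translate : x = translate s t 0 (x 0) := by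
    ext i
    fin_cases i <;> simp [translate_apply, rightDiv, alternating, *]
  exact eq_translate ▸ translate_mem s t 0 (x 0)

lemma mem_translates {s t : Module.End R V} {x : Fin 8 → V} :
    x ∈ translates s t ↔ ∃ v : Fin 8 → V, ∀ i, x i = ∑ j, alternating s t (rightDiv j i) (v j) := by
  constructor
  · intro hx
    obtain ⟨x', hx', hsum⟩ := (Submodule.mem_iSup_iff_exists_finsupp _ x).1 hx
    choose v hv using hx'
    refine ⟨v, fun i => ?_⟩
    rw [← hsum, Finsupp.sum_fintype _ _ fun _ => rfl, Finset.sum_apply]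
    exact Finset.sum_congr rfl fun j _ => congrFun (hv j).symm i
  · rintro ⟨v, hv⟩
    have : x = ∑ j, translate s t j (v j) :=
      funext fun i => (hv i).trans (Finset.sum_apply i _ fun j => translate s t j (v j)).symm
    exact this ▸ sum_mem fun j _ => translate_mem s t j (v j)

end Octagon

section Centralizer

universe v

variable {K : Type*} {V : Type v} [CommRing K] [AddCommGroup V] [Module K V]

lemma exists_commRing_smul_eq (u : (Module.End K V)ˣ) :
    ∃ (R : Type v) (_ : CommRing R) (_ : Algebra K R) (_ : Module R V) (_ : IsScalarTower K R V)
      (d : R), IsUnit d ∧ (∀ v, d • v = u.val v) ∧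
        ∀ f : Module.End K V, Commute f u → ∀ (a : R) v, f (a • v) = a • f v := by
  let C := Subalgebra.centralizer K {(u : Module.End K V)}
  have mem_C {f : Module.End K V} (hf : Commute f u) : f ∈ C :=
    (Subalgebra.mem_centralizer_iff K).2 fun _ hg => hg ▸ hf.symm
  have comm_of_mem (f : C) : Commute f.1 u :=
    .symm <| (Subalgebra.mem_centralizer_iff K).1 f.2 u rfl
  let d : Subalgebra.center K C := ⟨⟨u, mem_C (.refl _)⟩,
    Subalgebra.mem_center_iff.2 fun f => Subtype.ext (comm_of_mem f)⟩
  let d_inv : Subalgebra.center K C := ⟨⟨u.inv, mem_C (Commute.refl _).units_inv_left⟩,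
    Subalgebra.mem_center_iff.2 fun f => Subtype.ext (comm_of_mem f).units_inv_right⟩
  have isUnit_d : IsUnit d := ⟨⟨d, d_inv, Subtype.ext (Subtype.ext u.val_inv),
    Subtype.ext (Subtype.ext u.inv_val)⟩, rfl⟩
  refine ⟨Subalgebra.center K C, inferInstance, inferInstance, inferInstance, inferInstance, d,
    isUnit_d, fun _ => rfl, fun f hf a v => ?_⟩
  exact LinearMap.congr_fun
    (congrArg Subtype.val (Subalgebra.mem_center_iff.1 a.2 ⟨f, mem_C hf⟩)) v

theorem compatible_range_le_translates_of_isUnit {q : K} (h2 : IsUnit (2 : K))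
    (h8 : IsUnit (q ^ 8 - 1)) (hq : IsUnit q) {s t : Module.End K V} (hs : IsUnit s) (ht : IsUnit t)
    (hst : s * t * s * t = t * s * t * s)
    (cubic_s : (s - q • 1) * (s * s - 1) = 0) (cubic_t : (t - q • 1) * (t * t - 1) = 0) :
    compatible s t (LinearMap.range (s * s - 1)) (LinearMap.range (t * t - 1)) ≤
      translates s t := by
  intro x hx
  obtain ⟨D, hD⟩ := ((hs.mul ht).mul hs).mul ht
  have comm_s : Commute s D := by
    rw [commute_iff_eq, hD]; nth_rw 1 [hst]; simp only [mul_assoc]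
  have comm_t : Commute t D := by
    rw [commute_iff_eq, hD]; nth_rw 2 [hst]; simp only [mul_assoc]
  obtain ⟨R, _, _, _, _, d, hd, d_smul, linear⟩ := exists_commRing_smul_eq D
  let s' : Module.End R V := { s with map_smul' := linear s comm_s }
  let t' : Module.End R V := { t with map_smul' := linear t comm_t }
  have mem : x ∈ translates s' t' := by
    refine compatible_le_translates_of_eq_smul_one (q := algebraMap K R q) (d := d)
      (by simpa only [map_ofNat] using h2.map (algebraMap K R))
      (by simpa using h8.map (algebraMap K R)) (hq.map _) hd ?_ ?_ ?_ ?_ ?_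
    · ext v
      simpa [s', algebraMap_smul] using LinearMap.congr_fun cubic_s v
    · ext v
      simpa [t', algebraMap_smul] using LinearMap.congr_fun cubic_t v
    · ext v
      exact (LinearMap.congr_fun hD.symm v).trans (d_smul v).symm
    · ext v
      exact (LinearMap.congr_fun (hst.symm.trans hD.symm) v).trans (d_smul v).symm
    exact mem_compatible.2 (mem_compatible.1 hx :)
  have alternating_eq (i : Fin 8) (v : V) : alternating s' t' i v = alternating s t i v := by
    fin_cases i <;> rfl
  obtain ⟨v, hv⟩ := mem_translates.1 mem
  exact mem_translates.2 ⟨v, fun i => by simpa only [alternating_eq] using hv i⟩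

end Centralizer

section Field

variable {F V : Type*} [Field F] [AddCommGroup V] [Module F V]

theorem compatible_range_le_translates {q : F} (h2 : (2 : F) ≠ 0) (hq : q ^ 8 ≠ 1)
    {s t : Module.End F V} (hs : IsUnit s) (ht : IsUnit t)
    (hst : s * t * s * t = t * s * t * s)
    (cubic_s : (s - q • 1) * (s * s - 1) = 0) (cubic_t : (t - q • 1) * (t * t - 1) = 0) :
    compatible s t (LinearMap.range (s * s - 1)) (LinearMap.range (t * t - 1)) ≤
      translates s t := by
  rcases eq_or_ne q 0 with rfl | hq₀
  · rw [zero_smul, sub_zero, hs.mul_right_eq_zero] at cubic_s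
    rw [zero_smul, sub_zero, ht.mul_right_eq_zero] at cubic_t
    simpa only [cubic_s, cubic_t, LinearMap.range_zero] using compatible_bot_le_translates s t
  · exact compatible_range_le_translates_of_isUnit h2.isUnit
      (sub_ne_zero.2 hq).isUnit hq₀.isUnit hs ht hst cubic_s cubic_t

end Field

section DihedralGroup

open DihedralGroup (r sr)

/-- The vertices of the octagon as elements of the dihedral group of order 8. -/
def octagon : Fin 8 ≃ DihedralGroup 4 where
  toFun := ![r 0, sr 0, r 3, sr 3, r 2, sr 2, r 1, sr 1]
  invFun
    | r i => ![0, 6, 4, 2] i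
    | sr i => ![1, 7, 5, 3] i
  left_inv := by decide
  right_inv := by decide

lemma octagon_leftMul₁ : ∀ i, octagon (leftMul₁ i) = sr 0 * octagon i := by decide

lemma octagon_leftMul₂ : ∀ i, octagon (leftMul₂ i) = sr 1 * octagon i := by decide

lemma octagon_rightDiv : ∀ i j, octagon (rightDiv j i) = octagon i * (octagon j)⁻¹ := by decide

lemma TB2_octagon {F V : Type*} [Field F] [AddCommGroup V] [Module F V] (s t : Module.End F V)
    (i : Fin 8) : TB2 s t (octagon i) = alternating s t i := by
  fin_cases i <;> rfl

end DihedralGroup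

end CubicB2

open CubicB2 in
theorem stmt_15_general {F V : Type*} [Field F] (h2 : (2 : F) ≠ 0) [AddCommGroup V] [Module F V]
    (q : F) (hq : q ^ 8 ≠ 1)
    (s₁ s₂ : V →ₗ[F] V) (hs₁ : Function.Bijective s₁) (hs₂ : Function.Bijective s₂)
    (hbraid : s₁ ∘ₗ s₂ ∘ₗ s₁ ∘ₗ s₂ = s₂ ∘ₗ s₁ ∘ₗ s₂ ∘ₗ s₁)
    (hcub₁ : (s₁ - q • LinearMap.id) ∘ₗ (s₁ ∘ₗ s₁ - LinearMap.id) = 0)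
    (hcub₂ : (s₂ - q • LinearMap.id) ∘ₗ (s₂ ∘ₗ s₂ - LinearMap.id) = 0)
    (x : DihedralGroup 4 → V)
    (hx₁ : ∀ w, x (DihedralGroup.sr 0 * w) - s₁ (x w) ∈
      LinearMap.range (s₁ ∘ₗ s₁ - LinearMap.id))
    (hx₂ : ∀ w, x (DihedralGroup.sr 1 * w) - s₂ (x w) ∈
      LinearMap.range (s₂ ∘ₗ s₂ - LinearMap.id)) :
    ∃ v : DihedralGroup 4 → V,
      ∀ w, x w = ∑ y : DihedralGroup 4, TB2 s₁ s₂ (w * y⁻¹) (v y) := by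
  have hx : x ∘ octagon ∈ compatible (s₁ : Module.End F V) s₂
      (LinearMap.range (s₁ * s₁ - 1)) (LinearMap.range (s₂ * s₂ - 1)) := by
    refine mem_compatible.2 fun i => ?_
    simp only [Function.comp_apply, octagon_leftMul₁, octagon_leftMul₂]
    exact ⟨hx₁ _, hx₂ _⟩
  obtain ⟨v, hv⟩ := mem_translates.1 <| compatible_range_le_translates h2 hq
    ((Module.End.isUnit_iff s₁).2 hs₁) ((Module.End.isUnit_iff s₂).2 hs₂) hbraid hcub₁ hcub₂ hx
  refine ⟨v ∘ octagon.symm, fun w => ?_⟩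
  obtain ⟨i, rfl⟩ := octagon.surjective w
  rw [← octagon.sum_comp]
  simpa only [Function.comp_apply, Equiv.symm_apply_apply, ← octagon_rightDiv,
    TB2_octagon] using hv i

/-- (Every representation of the cubic Hecke algebra of type `B₂` with
`q⁸ ≠ 1` is good.) If `(s₁s₂)² = (s₂s₁)²`, `(sᵢ − q)(sᵢ² − 1) = 0` and `q⁸ ≠ 1`, and if a
family `(x_w)_{w ∈ W}` indexed by the dihedral group `W` of order 8 satisfies
`x_{σᵢ, w} − sᵢ(x_w) ∈ range(sᵢ² − 1)` for `i = 1, 2`, then `x_w = Σ_y T(w y⁻¹)(v_y)` for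
some vectors `v_y ∈ V`. -/
theorem stmt_15 {V : Type*} [AddCommGroup V] [Module ℂ V]
    (q : ℂ) (hq : q ^ 8 ≠ 1)
    (s₁ s₂ : V →ₗ[ℂ] V) (hs₁ : Function.Bijective s₁) (hs₂ : Function.Bijective s₂)
    (hbraid : s₁ ∘ₗ s₂ ∘ₗ s₁ ∘ₗ s₂ = s₂ ∘ₗ s₁ ∘ₗ s₂ ∘ₗ s₁)
    (hcub₁ : (s₁ - q • LinearMap.id) ∘ₗ (s₁ ∘ₗ s₁ - LinearMap.id) = 0)
    (hcub₂ : (s₂ - q • LinearMap.id) ∘ₗ (s₂ ∘ₗ s₂ - LinearMap.id) = 0)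
    (x : DihedralGroup 4 → V)
    (hx₁ : ∀ w, x (DihedralGroup.sr 0 * w) - s₁ (x w) ∈
      LinearMap.range (s₁ ∘ₗ s₁ - LinearMap.id))
    (hx₂ : ∀ w, x (DihedralGroup.sr 1 * w) - s₂ (x w) ∈
      LinearMap.range (s₂ ∘ₗ s₂ - LinearMap.id)) :
    ∃ v : DihedralGroup 4 → V,
      ∀ w, x w = ∑ y : DihedralGroup 4, TB2 s₁ s₂ (w * y⁻¹) (v y) :=
  stmt_15_general two_ne_zero q hq s₁ s₂ hs₁ hs₂ hbraid hcub₁ hcub₂ x hx₁ hx₂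
end

section
/- Let S₃ denote the group of permutations of a three-element set, and for w ∈ S₃ let ℓ(w) be the number of inversions of w (pairs a < b with w(a) > w(b)); the lengths of the six elements are 0, 1, 1, 2, 2, 3. Let M be the 6 × 6 matrix with rows and columns indexed by S₃ and with entries in the ring ℤ[u, u⁻¹] of Laurent polynomials given by M_{w,w'} = (−u)^{ℓ(w' w⁻¹)}. Then the determinant of M is divisible in ℤ[u, u⁻¹] by the product (Σ_{w∈S₃} u^{ℓ(w)}) · (Σ_{w∈S₃} (−u)^{ℓ(w)}) = (1 + 2u + 2u² + u³)(1 − 2u + 2u² − u³). -/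
open LaurentPolynomial

/-- The number of inversions of a permutation of `Fin 3` (its Coxeter length). -/
def invNum (w : Equiv.Perm (Fin 3)) : ℕ :=
  (Finset.univ.filter fun p : Fin 3 × Fin 3 => p.1 < p.2 ∧ w p.2 < w p.1).card

/-- The `6 × 6` matrix over `ℤ[u,u⁻¹]` with entries `M_{w,w'} = (−u)^{ℓ(w' w⁻¹)}`,
rows and columns indexed by `S₃`. -/
noncomputable def KLmatrix :
    Matrix (Equiv.Perm (Fin 3)) (Equiv.Perm (Fin 3)) (LaurentPolynomial ℤ) :=
  fun w w' => (-(T 1 : LaurentPolynomial ℤ)) ^ invNum (w' * w⁻¹)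

/-!
For a group homomorphism `φ : G → H` and a function `f` on `G`, the matrix `(f (y x⁻¹))_{x,y}` maps
functions pulled back from `H` to functions pulled back from `H`, and acts on them as the matrix of
the pushforward of `f`. When `φ` is surjective these functions form a direct summand of `R^G`, so
the determinant for `H` divides the determinant for `G`, over any commutative ring. Pushing forward
along the sign `G → {±1}` leaves a `2 × 2` matrix with rows `(a, b)` and `(b, a)`, whose determinant
`(a + b)(a - b)` is `(∑ f) (∑ sign · f)`; for `f = (-u) ^ ℓ` the sign is `(-1) ^ ℓ`.
-/

section Determinant

variable {m n R : Type*} [Fintype m] [DecidableEq m] [Fintype n] [DecidableEq n] [CommRing R]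

theorem det_dvd_det_of_mul_eq_mul {M : Matrix n n R} {Q : Matrix m m R} {P : Matrix n m R}
    {S : Matrix m n R} (hSP : S * P = 1) (hMP : M * P = P * Q) : Q.det ∣ M.det := by
  -- `M` acts as `P * Q * S` on the image of the idempotent `P * S`; `X` is `M` with this action
  -- replaced by the identity.
  let X : Matrix n n R := P * S + M * (1 - P * S)
  have hXP : X * P = P := by
    simp only [X, Matrix.add_mul, Matrix.sub_mul, Matrix.mul_assoc, hSP, Matrix.one_mul,
      Matrix.mul_one, sub_self, Matrix.mul_zero, add_zero]
  have hfactor : M = X * (1 + P * ((Q - 1) * S)) := by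
    rw [Matrix.mul_add, Matrix.mul_one, ← Matrix.mul_assoc X, hXP]
    simp only [X, Matrix.mul_sub, Matrix.sub_mul, Matrix.mul_one, Matrix.one_mul,
      ← Matrix.mul_assoc, hMP]
    abel
  have hdet : (1 + P * ((Q - 1) * S)).det = Q.det := by
    rw [Matrix.det_one_add_mul_comm, Matrix.mul_assoc, hSP, Matrix.mul_one, add_sub_cancel]
  exact ⟨X.det, by rw [hfactor, Matrix.det_mul, hdet, mul_comm]⟩

end Determinant

section FiberSum

variable {ι κ R : Type*} [Fintype ι] [DecidableEq κ]

/-- The pushforward of `f : ι → R` along `φ`, whose value at `k` is the sum of `f` over the fibre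
of `φ` above `k`. -/
def fiberSum [AddCommMonoid R] (φ : ι → κ) (f : ι → R) (k : κ) : R :=
  ∑ i with φ i = k, f i

theorem sum_comp_mul_eq_sum_mul_fiberSum [Fintype κ] [NonUnitalNonAssocSemiring R] (φ : ι → κ)
    (c : κ → R) (f : ι → R) : ∑ i, c (φ i) * f i = ∑ k, c k * fiberSum φ f k := by
  simp only [fiberSum, Finset.mul_sum]
  rw [← Finset.sum_fiberwise Finset.univ φ]
  exact Finset.sum_congr rfl fun k _ => Finset.sum_congr rfl fun i hi => by
    rw [(Finset.mem_filter.mp hi).2]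

end FiberSum

section GroupMatrix

variable {G H R : Type*} [Group G] [Group H]

/-- The group matrix of `f : G → R`, the matrix of the group determinant: its `(x, y)` entry is
`f (y * x⁻¹)`. -/
def groupMatrix (f : G → R) : Matrix G G R :=
  Matrix.of fun x y => f (y * x⁻¹)

variable [Fintype G] [DecidableEq H]

theorem sum_groupMatrix_fiber [AddCommMonoid R] (φ : G →* H) (f : G → R) (x : G) (h : H) :
    ∑ y with φ y = h, groupMatrix f x y = groupMatrix (fiberSum φ f) (φ x) h :=
  Finset.sum_equiv (Equiv.mulRight x⁻¹) (by simp) (by simp [groupMatrix])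

variable [DecidableEq G] [Fintype H] [CommRing R]

theorem det_groupMatrix_fiberSum_dvd {φ : G →* H} (hφ : Function.Surjective φ) (f : G → R) :
    (groupMatrix (fiberSum φ f)).det ∣ (groupMatrix f).det := by
  obtain ⟨s, hs⟩ := hφ.hasRightInverse
  let P : Matrix G H R := Matrix.of fun g h => if φ g = h then 1 else 0
  let S : Matrix H G R := Matrix.of fun h g => if s h = g then 1 else 0
  have hSP : S * P = 1 := by
    ext h h'
    simp only [S, P, Matrix.mul_apply, Matrix.of_apply, Matrix.one_apply, ite_mul, one_mul,
      zero_mul, Finset.sum_ite_eq, Finset.mem_univ, if_true, hs h]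
  have hMP : groupMatrix f * P = P * groupMatrix (fiberSum φ f) := by
    ext x h
    simp [P, Matrix.mul_apply, ← sum_groupMatrix_fiber, Finset.sum_filter]
  exact det_dvd_det_of_mul_eq_mul hSP hMP

theorem det_groupMatrix_intUnits (f : ℤˣ → R) :
    (groupMatrix f).det = (f 1 + f (-1)) * (f 1 - f (-1)) := by
  let e : Fin 2 ≃ ℤˣ := Equiv.ofBijective ![1, -1] (by decide)
  rw [← Matrix.det_submatrix_equiv_self e, Matrix.det_fin_two]
  simp only [e, groupMatrix, Equiv.coe_ofBijective, Matrix.submatrix_apply, Matrix.of_apply,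
    Matrix.cons_val_zero, Matrix.cons_val_one, Matrix.cons_val_fin_one, Int.units_inv_eq_self,
    mul_one, mul_neg, neg_neg]
  ring

theorem sum_mul_signed_sum_dvd_det_groupMatrix {χ : G →* ℤˣ} (hχ : Function.Surjective χ)
    (f : G → R) : (∑ g, f g) * (∑ g, ((χ g : ℤ) : R) * f g) ∣ (groupMatrix f).det := by
  have hsum (c : ℤˣ → R) :
      ∑ g, c (χ g) * f g = c 1 * fiberSum χ f 1 + c (-1) * fiberSum χ f (-1) := by
    rw [sum_comp_mul_eq_sum_mul_fiberSum, UnitsInt.univ, Finset.sum_pair (by decide)]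
  have htriv : ∑ g, f g = fiberSum χ f 1 + fiberSum χ f (-1) := by
    simpa using hsum fun _ => 1
  have hsign : ∑ g, ((χ g : ℤ) : R) * f g = fiberSum χ f 1 - fiberSum χ f (-1) := by
    simpa [sub_eq_add_neg] using hsum fun ε => ((ε : ℤ) : R)
  rw [htriv, hsign, ← det_groupMatrix_intUnits]
  exact det_groupMatrix_fiberSum_dvd hχ f

end GroupMatrix

section Inversions

open Equiv.Perm

variable {α β : Type*} [Fintype α] [LinearOrder α] [Fintype β] [LinearOrder β]

/-- The number of inversions of a permutation of a finite linear order, that is, its Coxeter length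
with respect to the adjacent transpositions. -/
def numInversions (w : Equiv.Perm α) : ℕ :=
  (Finset.univ.filter fun p : α × α => p.1 < p.2 ∧ w p.2 < w p.1).card

theorem numInversions_permCongr (e : α ≃o β) (w : Equiv.Perm α) :
    numInversions (e.toEquiv.permCongr w) = numInversions w :=
  (Finset.card_equiv (e.toEquiv.prodCongr e.toEquiv) (by simp)).symm

theorem sign_eq_neg_one_pow_numInversions_fin {n : ℕ} (w : Equiv.Perm (Fin n)) :
    sign w = (-1) ^ numInversions w := by
  calc sign w = ∏ i, ∏ j ∈ Finset.Ioi i, (if w i < w j then 1 else -1) :=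
        w.sign_eq_prod_prod_Ioi
    _ = ∏ i, ∏ j, if i < j ∧ w j < w i then -1 else 1 := by
      refine Finset.prod_congr rfl fun i _ => ?_
      rw [← Finset.filter_lt_eq_Ioi, Finset.prod_filter]
      refine Finset.prod_congr rfl fun j _ => ?_
      by_cases hij : i < j
      · rcases (w.injective.ne hij.ne).lt_or_gt with h | h <;> simp [hij, h, h.not_gt]
      · simp [hij]
    _ = (-1) ^ numInversions w := by
      rw [numInversions, ← Fintype.prod_prod_type', ← Finset.prod_filter, Finset.prod_const]

theorem sign_eq_neg_one_pow_numInversions (w : Equiv.Perm α) :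
    sign w = (-1) ^ numInversions w := by
  let e : α ≃o Fin (Fintype.card α) := (monoEquivOfFin α rfl).symm
  rw [← numInversions_permCongr e, ← sign_eq_neg_one_pow_numInversions_fin, sign_permCongr]

theorem numInversions_eq_zero [Subsingleton α] (w : Equiv.Perm α) : numInversions w = 0 := by
  simp [numInversions]

theorem stmt_16_general {R : Type*} [CommRing R] (q : R) :
    (∑ w : Equiv.Perm α, q ^ numInversions w) * (∑ w : Equiv.Perm α, (-q) ^ numInversions w) ∣
      (groupMatrix fun w : Equiv.Perm α => (-q) ^ numInversions w).det := by
  rcases subsingleton_or_nontrivial α with _ | _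
  · simp [groupMatrix, numInversions_eq_zero]
  have hsign (w : Equiv.Perm α) :
      ((sign w : ℤ) : R) * (-q) ^ numInversions w = q ^ numInversions w := by
    rw [sign_eq_neg_one_pow_numInversions]
    simp [← mul_pow]
  simpa only [hsign, mul_comm] using sum_mul_signed_sum_dvd_det_groupMatrix
    (sign_surjective α) fun w => (-q) ^ numInversions w

end Inversions

/-- `det M` is divisible in `ℤ[u,u⁻¹]` by
`(Σ_{w ∈ S₃} u^{ℓ(w)}) · (Σ_{w ∈ S₃} (−u)^{ℓ(w)}) = (1+2u+2u²+u³)(1−2u+2u²−u³)`. -/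
theorem stmt_16 :
    ((∑ w : Equiv.Perm (Fin 3), (T 1 : LaurentPolynomial ℤ) ^ invNum w) *
        (∑ w : Equiv.Perm (Fin 3), (-(T 1 : LaurentPolynomial ℤ)) ^ invNum w)) ∣
      KLmatrix.det :=
  -- `invNum` and `KLmatrix` unfold to instances of `numInversions` and `groupMatrix`.
  stmt_16_general (T 1)
end

section
/- Let S₃ denote the group of permutations of a three-element set, and for w ∈ S₃ let ℓ(w) be the number of inversions of w (pairs a < b with w(a) > w(b)). Let M be the 6 × 6 matrix with rows and columns indexed by S₃ and with entries in the ring ℤ[u, u⁻¹] of Laurent polynomials given by M_{w,w'} = (−u)^{ℓ(w' w⁻¹)}, and let p(u) = (1 − u²)(1 − u³) (the Poincaré polynomial of SL₃). Then there is no 6 × 6 matrix E with entries in ℤ[u, u⁻¹] such that M · E = p(u) · I, where I is the identity matrix. (Indeed, det M vanishes at a primitive 6th root of unity while p(u) does not; this underlies the counterexample showing that the Kazhdan–Laumon glued category for SL₃ has infinite cohomological dimension.) -/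
open LaurentPolynomial

/-!
The sum of each column of `M` is `∑ w, (-u) ^ ℓ(w) = (1 - u) (1 - u + u²)`, so the all-ones row
vector is a left eigenvector of `M` and `M * E = c • 1` forces this eigenvalue to divide `c`. Its
factor `1 - u + u²` does not divide `(1 - u²) (1 - u³)`: it vanishes at a primitive sixth root of
unity `ζ`, where `ζ² ≠ 1` and `ζ³ ≠ 1`.
-/

open Matrix

theorem dvd_mul_of_vecMul_eq_smul_of_mul_eq_smul_one {m n R : Type*} [Fintype m] [Fintype n]
    [DecidableEq m] [CommSemiring R] {M : Matrix m n R} {E : Matrix n m R} {v : m → R} {w : n → R}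
    {a c : R} (hv : v ᵥ* M = a • w) (hE : M * E = c • 1) (i : m) : a ∣ c * v i := by
  have smul_eq : c • v = a • (w ᵥ* E) :=
    calc c • v = v ᵥ* (M * E) := by rw [hE, vecMul_smul, vecMul_one]
      _ = a • (w ᵥ* E) := by rw [← vecMul_vecMul, hv, smul_vecMul]
  exact ⟨(w ᵥ* E) i, congrFun smul_eq i⟩

theorem one_vecMul_of_mul_inv {G R : Type*} [Group G] [Fintype G] [NonAssocSemiring R]
    (f : G → R) : 1 ᵥ* of (fun w w' => f (w' * w⁻¹)) = (∑ w, f w) • 1 := by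
  ext w'
  simpa [vecMul, dotProduct, div_eq_mul_inv] using (Equiv.divLeft w').sum_comp f

theorem sum_pow_invNum {R : Type*} [CommSemiring R] (x : R) :
    ∑ w, x ^ invNum w = (1 + x) * (1 + x + x ^ 2) := by
  have invNum_values : Finset.univ.val.map invNum = {0, 1, 1, 2, 2, 3} := by decide
  calc ∑ w, x ^ invNum w = ((Finset.univ.val.map invNum).map (x ^ ·)).sum := by
        rw [Multiset.map_map]; rfl
    _ = 1 + (x + (x + (x ^ 2 + (x ^ 2 + x ^ 3)))) := by simp [invNum_values]
    _ = (1 + x) * (1 + x + x ^ 2) := by ring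

theorem one_vecMul_KLmatrix : 1 ᵥ* KLmatrix = ((1 - T 1) * (1 - T 1 + T 2) : ℤ[T;T⁻¹]) • 1 := by
  have T_two : (T 2 : ℤ[T;T⁻¹]) = T 1 ^ 2 := (T_pow 1 2).symm
  calc 1 ᵥ* KLmatrix = (∑ w, (-T 1) ^ invNum w : ℤ[T;T⁻¹]) • 1 :=
        one_vecMul_of_mul_inv fun w => (-T 1) ^ invNum w
    _ = ((1 - T 1) * (1 - T 1 + T 2) : ℤ[T;T⁻¹]) • 1 := by
        rw [sum_pow_invNum, T_two, neg_sq, ← sub_eq_add_neg]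

theorem dvd_of_KLmatrix_mul_eq_smul_one
    {E : Matrix (Equiv.Perm (Fin 3)) (Equiv.Perm (Fin 3)) ℤ[T;T⁻¹]} {c : ℤ[T;T⁻¹]}
    (hE : KLmatrix * E = c • 1) : (1 - T 1) * (1 - T 1 + T 2) ∣ c := by
  simpa using dvd_mul_of_vecMul_eq_smul_of_mul_eq_smul_one one_vecMul_KLmatrix hE 1

section PrimitiveSixthRoot

variable {S : Type*} [CommRing S] [IsDomain S] {ζ : S}

theorem one_sub_add_sq_eq_zero_of_isPrimitiveRoot_six (hζ : IsPrimitiveRoot ζ 6) :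
    1 - ζ + ζ ^ 2 = 0 := by
  have isRoot : ζ ^ 2 - ζ + 1 = 0 := by
    simpa [Polynomial.cyclotomic_six] using hζ.isRoot_cyclotomic (by norm_num)
  linear_combination isRoot

theorem not_one_sub_T_one_add_T_two_dvd_of_isPrimitiveRoot_six {R : Type*} [CommRing R]
    (f : R →+* S) (hζ : IsPrimitiveRoot ζ 6) :
    ¬ (1 - T 1 + T 2 : R[T;T⁻¹]) ∣ (1 - T 2) * (1 - T 3) := by
  intro hdvd
  obtain ⟨u, rfl⟩ := hζ.isUnit (by norm_num)
  have eval_T_two : eval₂ f u (T 2) = (u : S) ^ 2 := eval₂_T_n f u 2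
  have eval_T_three : eval₂ f u (T 3) = (u : S) ^ 3 := eval₂_T_n f u 3
  have eval_eq_zero : (1 - (u : S) ^ 2) * (1 - (u : S) ^ 3) = 0 := by
    simpa [eval_T_two, eval_T_three, one_sub_add_sq_eq_zero_of_isPrimitiveRoot_six hζ]
      using map_dvd (eval₂ f u) hdvd
  have sq_ne_one : (u : S) ^ 2 ≠ 1 := hζ.pow_ne_one_of_pos_of_lt (by norm_num) (by norm_num)
  have cube_ne_one : (u : S) ^ 3 ≠ 1 := hζ.pow_ne_one_of_pos_of_lt (by norm_num) (by norm_num)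
  exact mul_ne_zero (sub_ne_zero.mpr sq_ne_one.symm) (sub_ne_zero.mpr cube_ne_one.symm)
    eval_eq_zero

end PrimitiveSixthRoot

/-- There is no `6 × 6` matrix `E` over `ℤ[u,u⁻¹]` with
`M · E = (1 − u²)(1 − u³) · I`, where `p(u) = (1 − u²)(1 − u³)` is the Poincaré polynomial
of `SL₃`. -/
theorem stmt_17 :
    ¬ ∃ E : Matrix (Equiv.Perm (Fin 3)) (Equiv.Perm (Fin 3)) (LaurentPolynomial ℤ),
      KLmatrix * E =
        ((1 - (T 2 : LaurentPolynomial ℤ)) * (1 - (T 3 : LaurentPolynomial ℤ))) •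
          (1 : Matrix (Equiv.Perm (Fin 3)) (Equiv.Perm (Fin 3)) (LaurentPolynomial ℤ)) := by
  rintro ⟨E, hE⟩
  have hdvd : (1 - T 1 + T 2 : ℤ[T;T⁻¹]) ∣ (1 - T 2) * (1 - T 3) :=
    dvd_of_mul_left_dvd (dvd_of_KLmatrix_mul_eq_smul_one hE)
  exact not_one_sub_T_one_add_T_two_dvd_of_isPrimitiveRoot_six (Int.castRingHom ℂ)
    (Complex.isPrimitiveRoot_exp 6 (by norm_num)) hdvd
end
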